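/- arXiv:1709.06945 — 7 statements merged into one kernel-verified Lean document; each statement's English description precedes it below -/
import Mathlib

section
/- Let B = ⊕_{m≥0} B_m be an approximable graded algebra over a field k. Then there exists a ∈ ℕ* such that for every sufficiently large integer p, the Krull dimension of the subalgebra ⟨B_p⟩ equals a; moreover, setting d(B) = a − 1, the sequence (dim_k(B_n) / n^{d(B)})_{n≥1} converges in ℝ≥0. -/
open Filter

/-- A graded algebra over a field `k`, presented as a family of `k`-subspaces
`ℬ m` of a commutative domain `A` (the pieces of the grading), is *approximable* if:
(0) `ℬ 0 = k` and the family is multiplicative (so `⊕ ℬ m` is a graded algebra,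
    which is an integral domain since `A` is);
(1) every graded piece is finite dimensional over `k`;
(2) `ℬ m ≠ 0` for all sufficiently large `m`;
(3) for every `ε > 0` there is `p₀` such that for all `p ≥ p₀`,
    `liminf_n dim (S^n(ℬ p)) / dim (ℬ (n p)) > 1 - ε`, where `S^n(ℬ p) = (ℬ p)^n`
    is the image of `Sym^n (ℬ p) → ℬ (n p)`. -/
def IsApproximable (k : Type*) {A : Type*} [Field k] [CommRing A] [IsDomain A]
    [Algebra k A] (ℬ : ℕ → Submodule k A) : Prop :=
  ℬ 0 = 1 ∧
  (∀ m n : ℕ, ℬ m * ℬ n ≤ ℬ (m + n)) ∧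
  (∀ m : ℕ, FiniteDimensional k (ℬ m)) ∧
  (∀ᶠ m in atTop, ℬ m ≠ ⊥) ∧
  (∀ ε : ℝ, 0 < ε → ∃ p₀ : ℕ, ∀ p ≥ p₀,
    1 - ε < liminf (fun n : ℕ =>
      (Module.finrank k ((ℬ p) ^ n : Submodule k A) : ℝ) /
        (Module.finrank k (ℬ (n * p)) : ℝ)) atTop)

theorem aux_dim_integral {R S : Type*} [CommRing R] [CommRing S] [Algebra R S]
    [Algebra.IsIntegral R S] [FaithfulSMul R S] :
    ringKrullDim S = ringKrullDim R := by
  apply le_antisymm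
  · refine Order.krullDim_le_of_strictMono (PrimeSpectrum.comap (algebraMap R S)) ?_
    intro I J h
    exact Ideal.IsIntegral.comap_lt_comap (R := R) (I := I.asIdeal) (J := J.asIdeal) h
  · refine iSup_le fun l => ?_
    obtain ⟨Q, hQ1, hQ2⟩ := Ideal.nonempty_primesOver (S := S) (RelSeries.head l).asIdeal
    obtain ⟨L, hL, -⟩ := Ideal.exists_ltSeries_of_hasGoingUp (S := S) l Q
    rw [← hL]
    exact Order.LTSeries.length_le_krullDim L

theorem aux_dim_trdeg (k R : Type*) [Field k] [CommRing R] [IsDomain R] [Algebra k R]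
    [Algebra.FiniteType k R] :
    ∃ s : ℕ, ringKrullDim R = s ∧ Algebra.trdeg k R = s := by
  obtain ⟨s, g, hg, hi⟩ := exists_integral_inj_algHom_of_fg k R
  refine ⟨s, ?_, ?_⟩
  · let _ := g.toRingHom.toAlgebra
    have : Algebra.IsIntegral (MvPolynomial (Fin s) k) R := ⟨hi⟩
    have : FaithfulSMul (MvPolynomial (Fin s) k) R :=
      (faithfulSMul_iff_algebraMap_injective _ _).mpr hg
    rw [aux_dim_integral (R := MvPolynomial (Fin s) k)]
    simp [MvPolynomial.ringKrullDim_of_isNoetherianRing]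
  · have hx : AlgebraicIndependent k (fun i => g (MvPolynomial.X i)) := by
      have : MvPolynomial.aeval (fun i => g (MvPolynomial.X i)) = g := by
        ext i; simp
      rw [AlgebraicIndependent, this]; exact hg
    have hb : IsTranscendenceBasis k (fun i => g (MvPolynomial.X i)) := by
      rw [isTranscendenceBasis_iff_algebraicIndependent_isAlgebraic]
      refine ⟨hx, ⟨fun r => ?_⟩⟩
      have h1 : g.range = Algebra.adjoin k (Set.range fun i => g (MvPolynomial.X i)) := by
        rw [Algebra.adjoin_range_eq_range_aeval]
        congr 1
        ext i; simp
      rw [← h1]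
      apply IsIntegral.isAlgebraic
      obtain ⟨p, hp, hpr⟩ := hi r
      refine ⟨p.map (g.rangeRestrict : _ →+* _), hp.map _, ?_⟩
      rw [Polynomial.eval₂_map]
      exact hpr
    have := hb.lift_cardinalMk_eq_trdeg
    simpa using this.symm

open Polynomial in
theorem aux_antidiff (P : ℚ[X]) (d : ℕ) (hP : P.degree < d) :
    ∃ Q : ℚ[X], Q.degree < (d + 1 : ℕ) ∧
      ∀ n : ℕ, ∑ i ∈ Finset.range n, P.eval (i : ℚ) = Q.eval (n : ℚ) := by
  have key : ∀ p : ℕ, ∃ Q : ℚ[X], Q.degree < (p + 2 : ℕ) ∧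
      ∀ n : ℕ, ∑ i ∈ Finset.range n, (i : ℚ) ^ p = Q.eval (n : ℚ) := by
    intro p
    refine ⟨∑ i ∈ Finset.range (p + 1),
      C (_root_.bernoulli i * ((p + 1).choose i : ℚ) / (p + 1)) * X ^ (p + 1 - i), ?_, ?_⟩
    · rw [← mem_degreeLT]
      refine Submodule.sum_mem _ fun i hi => ?_
      rw [mem_degreeLT]
      refine (degree_C_mul_X_pow_le _ _).trans_lt ?_
      exact_mod_cast (by omega : p + 1 - i < p + 2)
    · intro n
      rw [sum_range_pow, eval_finsetSum]
      refine Finset.sum_congr rfl fun i hi => ?_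
      simp only [eval_mul, eval_C, eval_pow, eval_X]
      ring
  choose F hF1 hF2 using key
  refine ⟨∑ p ∈ Finset.range d, C (P.coeff p) * F p, ?_, ?_⟩
  · rw [← mem_degreeLT]
    refine Submodule.sum_mem _ fun i hi => ?_
    rw [C_mul']
    refine Submodule.smul_mem _ _ ?_
    rw [mem_degreeLT]
    refine (hF1 i).trans_le ?_
    have := Finset.mem_range.mp hi
    exact_mod_cast (by omega : i + 2 ≤ d + 1)
  · intro n
    rw [eval_finsetSum]
    have : ∀ i ∈ Finset.range n, P.eval (i : ℚ) =
        ∑ p ∈ Finset.range d, P.coeff p * (i : ℚ) ^ p := by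
      intro i _
      by_cases h0 : P = 0
      · simp [h0]
      · rw [eval_eq_sum_range' ((natDegree_lt_iff_degree_lt h0).mpr hP)]
    rw [Finset.sum_congr rfl this, Finset.sum_comm]
    refine Finset.sum_congr rfl fun p _ => ?_
    rw [← Finset.mul_sum, hF2, eval_mul, eval_C]

open Polynomial in
theorem aux_evsum (g : ℕ → ℕ) (P : ℚ[X]) (d : ℕ) (hP : P.degree < d)
    (hg : ∀ᶠ n in atTop, (g n : ℚ) = P.eval (n : ℚ)) :
    ∃ Q : ℚ[X], Q.degree < (d + 1 : ℕ) ∧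
      ∀ᶠ n : ℕ in atTop, ∑ i ∈ Finset.range n, (g i : ℚ) = Q.eval (n : ℚ) := by
  obtain ⟨Q, hQ, hQe⟩ := aux_antidiff P d hP
  obtain ⟨N, hN⟩ := eventually_atTop.mp hg
  refine ⟨Q + C (∑ i ∈ Finset.range N, ((g i : ℚ) - P.eval (i : ℚ))), ?_, ?_⟩
  · refine (degree_add_le _ _).trans_lt (max_lt hQ (degree_C_le.trans_lt ?_))
    exact_mod_cast Nat.succ_pos d
  · filter_upwards [eventually_ge_atTop N] with n hn
    rw [eval_add, eval_C, ← hQe, ← sub_eq_iff_eq_add', ← Finset.sum_sub_distrib]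
    symm
    apply Finset.sum_subset (Finset.range_mono hn)
    intro i _ hi
    rw [hN i (by simpa using hi), sub_self]

open Classical in
/-- Number of elements of total degree `n` in a set of exponents. -/
noncomputable def auxCount {s : ℕ} (L : Set (Fin s → ℕ)) (n : ℕ) : ℕ :=
  ((Finset.Nat.antidiagonalTuple s n).filter (· ∈ L)).card

/-- The slice of a set of exponents. -/
def auxSlice {s : ℕ} (L : Set (Fin (s + 1) → ℕ)) (j : ℕ) : Set (Fin s → ℕ) :=
  {x | (Fin.cons j x : Fin (s + 1) → ℕ) ∈ L}

theorem aux_count_succ {s : ℕ} (L : Set (Fin (s + 1) → ℕ)) (n : ℕ) :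
    auxCount L n = ∑ j ∈ Finset.range (n + 1), auxCount (auxSlice L j) (n - j) := by
  classical
  unfold auxCount
  rw [Finset.card_eq_sum_card_fiberwise (f := fun x => x 0) (t := Finset.range (n + 1))]
  · refine Finset.sum_congr rfl fun j hj => ?_
    have hj' : j ≤ n := by simpa [Nat.lt_succ_iff] using hj
    refine Finset.card_bij' (fun x _ => Fin.tail x) (fun y _ => Fin.cons j y) ?_ ?_ ?_ ?_
    · intro x hx
      simp only [Finset.mem_filter, Finset.Nat.mem_antidiagonalTuple] at hx ⊢
      obtain ⟨⟨h1, h2⟩, h3⟩ := hx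
      rw [Fin.sum_univ_succ] at h1
      refine ⟨?_, ?_⟩
      · unfold Fin.tail; omega
      · unfold auxSlice
        rw [Set.mem_ofPred_eq, ← h3, Fin.cons_self_tail]
        exact h2
    · intro y hy
      simp only [Finset.mem_filter, Finset.Nat.mem_antidiagonalTuple] at hy ⊢
      refine ⟨⟨?_, hy.2⟩, by simp⟩
      rw [Fin.sum_univ_succ]
      simp only [Fin.cons_zero, Fin.cons_succ]
      omega
    · intro x hx
      simp only [Finset.mem_filter] at hx
      simp only [← hx.2, Fin.cons_self_tail]
    · intro y hy
      simp
  · intro x hx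
    simp only [Finset.coe_filter, Finset.Nat.mem_antidiagonalTuple, Set.mem_ofPred_eq] at hx
    simp only [Finset.coe_range, Set.mem_Iio]
    have := hx.1
    rw [Fin.sum_univ_succ] at this
    omega

theorem aux_stab {s : ℕ} (M : ℕ → Set (Fin s → ℕ)) (hM : ∀ j, IsLowerSet (M j))
    (hanti : Antitone M) : ∃ J, ∀ j ≥ J, M j = M J := by
  by_contra! h
  -- for each J there is j > J with an element in M J not in M j
  have h' : ∀ J, ∃ j, J < j ∧ ∃ x, x ∈ M J ∧ x ∉ M j := by
    intro J
    obtain ⟨j, hj, hne⟩ := h J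
    have hss : M j ⊂ M J := lt_of_le_of_ne (hanti hj) hne
    obtain ⟨x, hx, hx'⟩ := Set.exists_of_ssubset hss
    refine ⟨j, lt_of_le_of_ne hj ?_, x, hx, hx'⟩
    rintro rfl; exact hne rfl
  choose f hf x hx hx' using h'
  obtain ⟨a, b, hab, hle⟩ := wellQuasiOrdered_le (fun n => x (f^[n] 0))
  have hmono : StrictMono (fun n => f^[n] 0) := by
    apply strictMono_nat_of_lt_succ
    intro n
    rw [Function.iterate_succ_apply']
    exact hf _
  have h1 : x (f^[a] 0) ∈ M (f^[b] 0) := hM _ hle (hx _)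
  have h2 : f^[a + 1] 0 ≤ f^[b] 0 := hmono.monotone hab
  have h3 := hanti h2 h1
  rw [Function.iterate_succ_apply'] at h3
  exact hx' _ h3

open Polynomial in
theorem aux_comb (s : ℕ) : ∀ (L : Set (Fin s → ℕ)) (_ : IsLowerSet L) (d : ℕ)
    (_ : ∀ T : Finset (Fin s), (∀ x : Fin s → ℕ, (∀ i ∉ T, x i = 0) → x ∈ L) → T.card ≤ d),
    ∃ P : ℚ[X], P.degree < d ∧ ∀ᶠ n : ℕ in atTop, (auxCount L n : ℚ) = P.eval (n : ℚ) := by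
  induction s with
  | zero =>
    intro L hL d hd
    refine ⟨0, by simp [bot_lt_iff_ne_bot], ?_⟩
    filter_upwards [eventually_ge_atTop 1] with n hn
    obtain ⟨m, rfl⟩ : ∃ m, n = m + 1 := ⟨n - 1, by omega⟩
    simp [auxCount]
  | succ s ih =>
    intro L hL d hd
    have hlow : ∀ j, IsLowerSet (auxSlice L j) := by
      intro j x y hxy hx
      refine hL ?_ hx
      exact Fin.cons_le_cons.mpr ⟨le_rfl, hxy⟩
    have hanti : Antitone (auxSlice L) := by
      intro i j hij x hx
      refine hL ?_ hx
      exact Fin.cons_le_cons.mpr ⟨hij, le_rfl⟩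
    obtain ⟨J, hJ⟩ := aux_stab _ hlow hanti
    have hP : ∀ j, ∃ P : ℚ[X], P.degree < d ∧
        ∀ᶠ n : ℕ in atTop, (auxCount (auxSlice L j) n : ℚ) = P.eval (n : ℚ) := by
      intro j
      refine ih _ (hlow j) d fun T hT => ?_
      have := hd (T.map (Fin.succEmb s)) ?_
      · simpa using this
      · intro x hx
        have h0 : x 0 = 0 := hx 0 (by simp)
        have h1 : Fin.tail x ∈ auxSlice L j := hT _ fun i hi => hx i.succ (by simpa using hi)
        have h2 := hanti (Nat.zero_le j) h1
        unfold auxSlice at h2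
        rw [Set.mem_ofPred_eq, ← h0, Fin.cons_self_tail] at h2
        exact h2
    have hQ : ∃ Q : ℚ[X], Q.degree < d ∧ ∀ᶠ n : ℕ in atTop,
        ∑ i ∈ Finset.range n, (auxCount (auxSlice L J) i : ℚ) = Q.eval (n : ℚ) := by
      by_cases he : auxSlice L J = ∅
      · refine ⟨0, by simp [bot_lt_iff_ne_bot], ?_⟩
        filter_upwards with n
        simp [he, auxCount]
      · have hface : ∀ T : Finset (Fin s),
            (∀ x : Fin s → ℕ, (∀ i ∉ T, x i = 0) → x ∈ auxSlice L J) → T.card + 1 ≤ d := by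
          intro T hT
          have := hd (insert 0 (T.map (Fin.succEmb s))) ?_
          · rwa [Finset.card_insert_of_notMem (by simp), Finset.card_map] at this
          · intro x hx
            have h1 : Fin.tail x ∈ auxSlice L J :=
              hT _ fun i hi => hx i.succ (by simpa using hi)
            have h2 : Fin.tail x ∈ auxSlice L (x 0) := by
              rcases le_total J (x 0) with h | h
              · rw [hJ _ h]; exact h1
              · exact hanti h h1
            unfold auxSlice at h2
            rw [Set.mem_ofPred_eq, Fin.cons_self_tail] at h2
            exact h2
        have hd1 : 1 ≤ d := by
          obtain ⟨y, hy⟩ := Set.nonempty_iff_ne_empty.mpr he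
          have := hface ∅ fun x hx => hlow J (fun i => by simp [hx i]) hy
          simpa using this
        obtain ⟨e, rfl⟩ : ∃ e, d = e + 1 := ⟨d - 1, by omega⟩
        obtain ⟨P, hP1, hP2⟩ := ih _ (hlow J) e fun T hT => by
          have := hface T hT; omega
        exact aux_evsum _ P e hP1 hP2
    obtain ⟨Q, hQ1, hQ2⟩ := hQ
    choose P hP1 hP2 using hP
    refine ⟨∑ j ∈ Finset.range J, taylor (-(j : ℚ)) (P j) + taylor (1 - (J : ℚ)) Q, ?_, ?_⟩
    · rw [← mem_degreeLT]
      refine Submodule.add_mem _ (Submodule.sum_mem _ fun j _ => ?_) ?_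
      · rw [mem_degreeLT, degree_taylor]; exact hP1 j
      · rw [mem_degreeLT, degree_taylor]; exact hQ1
    · have hQ3 : ∀ᶠ n : ℕ in atTop, ∑ i ∈ Finset.range (n - J + 1),
          (auxCount (auxSlice L J) i : ℚ) = Q.eval ((n - J + 1 : ℕ) : ℚ) :=
        ((tendsto_add_atTop_nat 1).comp (tendsto_sub_atTop_nat J)).eventually hQ2
      have hP3 : ∀ᶠ n : ℕ in atTop, ∀ j ∈ Finset.range J,
          (auxCount (auxSlice L j) (n - j) : ℚ) = (P j).eval ((n - j : ℕ) : ℚ) := by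
        rw [eventually_all_finset]
        intro j _
        exact (tendsto_sub_atTop_nat j).eventually (hP2 j)
      filter_upwards [hQ3, hP3, eventually_ge_atTop J] with n h1 h2 hn
      rw [aux_count_succ, eval_add, eval_finsetSum]
      obtain ⟨m, rfl⟩ : ∃ m, n = J + m := ⟨n - J, by omega⟩
      rw [add_assoc, Finset.sum_range_add, Nat.cast_add, Nat.cast_sum]
      congr 1
      · refine Finset.sum_congr rfl fun j hj => ?_
        rw [h2 j hj, taylor_eval, Nat.cast_sub (by have := Finset.mem_range.mp hj; omega)]
        congr 1
        ring
      · rw [taylor_eval, ← Finset.sum_range_reflect, Nat.cast_sum]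
        have h3 : ((J + m : ℕ) : ℚ) + (1 - (J : ℚ)) = ((J + m - J + 1 : ℕ) : ℚ) := by
          rw [Nat.add_sub_cancel_left]; push_cast; ring
        rw [h3, ← h1, Nat.add_sub_cancel_left]
        refine Finset.sum_congr rfl fun i hi => ?_
        have := Finset.mem_range.mp hi
        rw [hJ _ (by omega)]
        congr 2
        omega

/-- Monomials in a finite family. -/
def auxMon {A ι : Type*} [CommRing A] [Fintype ι] (x : ι → A) (m : ι → ℕ) : A :=
  ∏ i, x i ^ m i

theorem auxMon_add {A ι : Type*} [CommRing A] [Fintype ι] (x : ι → A) (m n : ι → ℕ) :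
    auxMon x (m + n) = auxMon x m * auxMon x n := by
  simp [auxMon, pow_add, Finset.prod_mul_distrib]

theorem auxMon_single {A ι : Type*} [CommRing A] [Fintype ι] [DecidableEq ι] (x : ι → A) (i : ι) :
    auxMon x (Pi.single i 1) = x i := by
  unfold auxMon
  rw [Finset.prod_eq_single i]
  · simp
  · intro j _ hj; simp [hj]
  · simp

theorem aux_algInd_iff {k A ι : Type*} [Field k] [CommRing A] [Algebra k A] [Fintype ι]
    (x : ι → A) :
    AlgebraicIndependent k x ↔ LinearIndependent k (fun m : ι →₀ ℕ => auxMon x m) := by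
  have h : Finsupp.linearCombination k (fun m : ι →₀ ℕ => auxMon x m) =
      (MvPolynomial.aeval x : MvPolynomial ι k →ₐ[k] A).toLinearMap ∘ₗ
        (MvPolynomial.basisMonomials ι k).repr.symm.toLinearMap := by
    ext m
    simp [auxMon, MvPolynomial.aeval_monomial, Finsupp.prod_fintype]
  rw [LinearIndependent, h, AlgebraicIndependent, LinearMap.coe_comp]
  exact (Function.Injective.of_comp_iff' _ (LinearEquiv.bijective _)).symm

theorem aux_span_pow {k A : Type*} [Field k] [CommRing A] [Algebra k A] {s : ℕ}
    (x : Fin s → A) (n : ℕ) :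
    (Submodule.span k (Set.range x)) ^ n =
      Submodule.span k (auxMon x '' {m | ∑ i, m i = n}) := by
  induction n with
  | zero =>
    rw [pow_zero, Submodule.one_eq_span]
    congr 1
    ext a
    simp only [Set.mem_singleton_iff, Set.mem_image, Set.mem_ofPred_eq]
    constructor
    · rintro rfl
      exact ⟨0, by simp, by simp [auxMon]⟩
    · rintro ⟨m, hm, rfl⟩
      have : ∀ i, m i = 0 := by simpa using hm
      simp [auxMon, this]
  | succ n ih =>
    rw [pow_succ, ih, Submodule.span_mul_span]
    congr 1
    ext a
    simp only [Set.mem_mul, Set.mem_image, Set.mem_ofPred_eq, Set.mem_range]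
    constructor
    · rintro ⟨_, ⟨m, hm, rfl⟩, _, ⟨i, rfl⟩, rfl⟩
      refine ⟨m + Pi.single i 1, ?_, ?_⟩
      · simp [Finset.sum_add_distrib, hm]
      · rw [auxMon_add, auxMon_single]
    · rintro ⟨m, hm, rfl⟩
      obtain ⟨i, hi⟩ : ∃ i, m i ≠ 0 := by
        by_contra! h
        simp [h] at hm
      have hle : Pi.single i 1 ≤ m := by
        intro j
        by_cases hj : j = i
        · subst hj; simp; omega
        · simp [hj]
      have hsum : m - Pi.single i 1 + Pi.single i 1 = m := tsub_add_cancel_of_le hle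
      refine ⟨_, ⟨m - Pi.single i 1, ?_, rfl⟩, _, ⟨i, rfl⟩, ?_⟩
      · have := congrArg (fun f : Fin s → ℕ => ∑ j, f j) hsum
        simp only [Pi.add_apply, Finset.sum_add_distrib, Finset.sum_pi_single'] at this
        simp at this
        simp only [hm] at this
        simpa using this
      · conv_rhs => rw [← hsum, auxMon_add, auxMon_single]

open Classical in
theorem aux_greedy {k M ι α : Type*} [Field k] [AddCommGroup M] [Module k M] [LinearOrder α]
    (f : ι → α) (hf : Function.Injective f) (v : ι → M) (F : Finset ι) :
    LinearIndepOn k v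
      (F.filter (fun i => v i ∉ Submodule.span k (v '' {j | j ∈ F ∧ f j < f i})) : Set ι) ∧
    Submodule.span k (v ''
      (F.filter (fun i => v i ∉ Submodule.span k (v '' {j | j ∈ F ∧ f j < f i})) : Set ι)) =
      Submodule.span k (v '' F) := by
  induction F using Finset.induction_on_max_value f with
  | empty => simp
  | insert a s ha hmax ih =>
    have hlt : ∀ x ∈ s, f x < f a := fun x hx =>
      lt_of_le_of_ne (hmax x hx) fun h => ha (hf h ▸ hx)
    have e1 : {j | j ∈ insert a s ∧ f j < f a} = (s : Set ι) := by
      ext j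
      simp only [Finset.mem_insert, Set.mem_ofPred_eq, Finset.mem_coe]
      constructor
      · rintro ⟨rfl | h, h2⟩
        · exact absurd h2 (lt_irrefl _)
        · exact h
      · exact fun h => ⟨Or.inr h, hlt j h⟩
    have e2 : ∀ i ∈ s, {j | j ∈ insert a s ∧ f j < f i} = {j | j ∈ s ∧ f j < f i} := by
      intro i hi
      ext j
      simp only [Finset.mem_insert, Set.mem_ofPred_eq]
      constructor
      · rintro ⟨rfl | h, h2⟩
        · exact absurd h2 (hlt i hi).le.not_gt
        · exact ⟨h, h2⟩
      · exact fun h => ⟨Or.inr h.1, h.2⟩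
    have e3 : s.filter (fun i => v i ∉ Submodule.span k (v '' {j | j ∈ insert a s ∧ f j < f i})) =
        s.filter (fun i => v i ∉ Submodule.span k (v '' {j | j ∈ s ∧ f j < f i})) := by
      refine Finset.filter_congr fun i hi => ?_
      rw [e2 i hi]
    rw [Finset.filter_insert, e3, e1]
    obtain ⟨ih1, ih2⟩ := ih
    split_ifs with h
    · refine ⟨ih1, ?_⟩
      rw [ih2, Finset.coe_insert, Set.image_insert_eq, Submodule.span_insert, eq_comm,
        sup_eq_right, Submodule.span_singleton_le_iff_mem]
      exact h
    · rw [Finset.coe_insert, Finset.coe_insert, Set.image_insert_eq, Set.image_insert_eq,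
        Submodule.span_insert, Submodule.span_insert, ih2]
      refine ⟨ih1.insert ?_, rfl⟩
      rw [ih2]; exact h

/-- Standard exponents. -/
def auxStd (k : Type*) {A : Type*} [Field k] [CommRing A] [Algebra k A] {s : ℕ}
    (x : Fin s → A) : Set (Fin s → ℕ) :=
  {m | auxMon x m ∉ Submodule.span k
    (auxMon x '' {m' | ∑ i, m' i = ∑ i, m i ∧ toLex m' < toLex m})}

theorem auxStd_lower (k : Type*) {A : Type*} [Field k] [CommRing A] [Algebra k A] {s : ℕ}
    (x : Fin s → A) : IsLowerSet (auxStd k x) := by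
  intro m₂ m hle h2 h1
  apply h2
  obtain ⟨e, rfl⟩ : ∃ e, m₂ = e + m := ⟨m₂ - m, (tsub_add_cancel_of_le hle).symm⟩
  rw [auxMon_add]
  have := Submodule.mem_map_of_mem (f := LinearMap.mulLeft k (auxMon x e)) h1
  rw [Submodule.map_span, LinearMap.mulLeft_apply] at this
  refine Submodule.span_mono ?_ this
  rintro _ ⟨_, ⟨m', ⟨hm1, hm2⟩, rfl⟩, rfl⟩
  refine ⟨e + m', ⟨?_, ?_⟩, ?_⟩
  · simp [Finset.sum_add_distrib, hm1]
  · rw [toLex_add, toLex_add]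
    exact add_lt_add_right hm2 _
  · rw [auxMon_add, LinearMap.mulLeft_apply]

open Classical in
theorem auxStd_deg {k A : Type*} [Field k] [CommRing A] [Algebra k A] {s : ℕ}
    (x : Fin s → A) (n : ℕ) :
    LinearIndepOn k (auxMon x)
      ((Finset.Nat.antidiagonalTuple s n).filter (· ∈ auxStd k x) : Set (Fin s → ℕ)) ∧
    Submodule.span k (auxMon x ''
      ((Finset.Nat.antidiagonalTuple s n).filter (· ∈ auxStd k x) : Set (Fin s → ℕ))) =
      (Submodule.span k (Set.range x)) ^ n := by
  have h := aux_greedy (k := k) (fun m : Fin s → ℕ => toLex m) toLex.injective (auxMon x)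
    (Finset.Nat.antidiagonalTuple s n)
  simp only [Finset.coe_filter] at h ⊢
  have e : {i | i ∈ Finset.Nat.antidiagonalTuple s n ∧ auxMon x i ∉
      Submodule.span k (auxMon x ''
        {j | j ∈ Finset.Nat.antidiagonalTuple s n ∧ toLex j < toLex i})} =
      {i | i ∈ Finset.Nat.antidiagonalTuple s n ∧ i ∈ auxStd k x} := by
    ext i
    simp only [Set.mem_ofPred_eq]
    refine and_congr_right fun hi => ?_
    rw [Finset.Nat.mem_antidiagonalTuple] at hi
    simp only [auxStd, Set.mem_ofPred_eq, Finset.Nat.mem_antidiagonalTuple, hi]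
  rw [← e]
  refine ⟨h.1, h.2.trans ?_⟩
  rw [aux_span_pow]
  congr 2
  ext m
  simp [Finset.Nat.mem_antidiagonalTuple]

theorem auxStd_finrank {k A : Type*} [Field k] [CommRing A] [Algebra k A] {s : ℕ}
    (x : Fin s → A) (n : ℕ) :
    Module.finrank k ((Submodule.span k (Set.range x)) ^ n : Submodule k A) =
      auxCount (auxStd k x) n := by
  classical
  obtain ⟨h1, h2⟩ := auxStd_deg (k := k) x n
  rw [← h2, Set.image_eq_range]
  have := finrank_span_eq_card h1
  rw [auxCount]
  convert! this using 1
  simp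

theorem aux_graded_li {k A ι : Type*} [Field k] [CommRing A] [Algebra k A]
    (𝒜 : ℕ → Submodule k A) [GradedAlgebra 𝒜] (v : ι → A) (deg : ι → ℕ)
    (hv : ∀ i, v i ∈ 𝒜 (deg i)) (S : Set ι)
    (h : ∀ n, LinearIndepOn k v {i | i ∈ S ∧ deg i = n}) : LinearIndepOn k v S := by
  classical
  rw [linearIndepOn_iff']
  intro t g hts hsum i hi
  have h1 := linearIndepOn_iff'.1 (h (deg i)) (t.filter (fun j => deg j = deg i)) g
    (fun j hj => by
      simp only [Finset.coe_filter, Set.mem_ofPred_eq] at hj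
      exact ⟨hts hj.1, hj.2⟩)
  refine h1 ?_ i (by simp [hi])
  have h2 := congrArg (GradedAlgebra.proj 𝒜 (deg i)) hsum
  rw [map_sum, map_zero] at h2
  rw [Finset.sum_filter]
  refine Eq.trans ?_ h2
  refine Finset.sum_congr rfl fun j _ => ?_
  rw [map_smul, GradedAlgebra.proj_apply]
  split_ifs with hj
  · rw [← hj, DirectSum.decompose_of_mem_same 𝒜 (hv j)]
  · rw [DirectSum.decompose_of_mem_ne 𝒜 (hv j) hj, smul_zero]

theorem auxMon_mem {k A ι : Type*} [Field k] [CommRing A] [Algebra k A] [Fintype ι]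
    (𝒜 : ℕ → Submodule k A) [GradedAlgebra 𝒜] (p : ℕ) (x : ι → A) (hx : ∀ i, x i ∈ 𝒜 p)
    (m : ι → ℕ) : auxMon x m ∈ 𝒜 ((∑ i, m i) * p) := by
  unfold auxMon
  rw [Finset.sum_mul]
  refine SetLike.prod_mem_graded _ _ _ fun i _ => ?_
  have := SetLike.pow_mem_graded (m i) (hx i)
  simpa using this

theorem aux_face {k A : Type*} [Field k] [CommRing A] [Algebra k A]
    (𝒜 : ℕ → Submodule k A) [GradedAlgebra 𝒜] (p : ℕ) (hp : 0 < p) {s : ℕ} (x : Fin s → A)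
    (hx : ∀ i, x i ∈ 𝒜 p) (T : Finset (Fin s))
    (hT : ∀ y : Fin s → ℕ, (∀ i ∉ T, y i = 0) → y ∈ auxStd k x) :
    AlgebraicIndependent k (fun i : T => x i) := by
  classical
  have hli : LinearIndepOn k (auxMon x) (auxStd k x) := by
    refine aux_graded_li 𝒜 _ (fun m => (∑ i, m i) * p) (auxMon_mem 𝒜 p x hx) _ fun n => ?_
    refine (auxStd_deg (k := k) x (n / p)).1.mono ?_
    rintro m ⟨h1, h2⟩
    simp only [Finset.coe_filter, Set.mem_ofPred_eq, Finset.Nat.mem_antidiagonalTuple]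
    refine ⟨?_, h1⟩
    rw [← h2, Nat.mul_div_cancel _ hp]
  rw [aux_algInd_iff]
  let ext : (T →₀ ℕ) → (Fin s → ℕ) := fun m i => if h : i ∈ T then m ⟨i, h⟩ else 0
  have hext : ∀ m, ext m ∈ auxStd k x := fun m => hT _ fun i hi => by simp [ext, hi]
  have hinj : Function.Injective (fun m => (⟨ext m, hext m⟩ : auxStd k x)) := by
    intro m m' h
    have h' : ext m = ext m' := congrArg Subtype.val h
    ext i
    have := congrFun h' i
    simpa [ext] using this
  have := LinearIndependent.comp hli _ hinj
  convert! this using 1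
  ext m
  simp only [Function.comp, auxMon]
  rw [← Finset.prod_subset (Finset.subset_univ T), ← Finset.prod_coe_sort T]
  · refine Finset.prod_congr rfl fun i _ => ?_
    simp [ext]
  · intro i _ hi
    simp [ext, hi]

theorem aux_count_lower (b n : ℕ) :
    (n / (b + 1) + 1) ^ b ≤ (Finset.Nat.antidiagonalTuple (b + 1) n).card := by
  classical
  have h1 : (Fintype.piFinset (fun _ : Fin b => Finset.range (n / (b + 1) + 1))).card =
      (n / (b + 1) + 1) ^ b := by simp
  rw [← h1]
  refine Finset.card_le_card_of_injOn (fun e => (Fin.cons (n - ∑ i, e i) e : Fin (b + 1) → ℕ)) ?_ ?_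
  · intro e he
    simp only [Finset.mem_coe, Fintype.mem_piFinset, Finset.mem_range] at he
    simp only [Finset.mem_coe, Finset.Nat.mem_antidiagonalTuple, Fin.sum_univ_succ, Fin.cons_zero,
      Fin.cons_succ]
    have h2 : ∑ i, e i ≤ ∑ i : Fin b, n / (b + 1) :=
      Finset.sum_le_sum fun i _ => Nat.lt_succ_iff.1 (he i)
    simp only [Finset.sum_const, Finset.card_univ, Fintype.card_fin, smul_eq_mul] at h2
    have h3 : b * (n / (b + 1)) ≤ (b + 1) * (n / (b + 1)) := by gcongr; omega
    have h4 := Nat.mul_div_le n (b + 1)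
    omega
  · intro e _ e' _ h
    exact (Fin.cons_injective2 h).2

theorem aux_lower {k A : Type*} [Field k] [CommRing A] [Algebra k A] (V : Submodule k A)
    [FiniteDimensional k V] (b : ℕ) (y : Fin (b + 1) → A) (hy : ∀ i, y i ∈ V)
    (hi : AlgebraicIndependent k y) (n : ℕ) :
    (n / (b + 1) + 1) ^ b ≤ Module.finrank k (V ^ n : Submodule k A) := by
  refine (aux_count_lower b n).trans ?_
  have hfd : FiniteDimensional k (V ^ n : Submodule k A) :=
    Module.Finite.iff_fg.2 (Submodule.FG.pow (Module.Finite.iff_fg.1 inferInstance) n)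
  rw [aux_algInd_iff] at hi
  have hmem : ∀ m : Fin (b + 1) → ℕ, ∑ i, m i = n → auxMon y m ∈ V ^ n := by
    intro m hm
    have h1 : auxMon y m ∈ Submodule.span k (Set.range y) ^ n := by
      rw [aux_span_pow]
      exact Submodule.subset_span ⟨m, hm, rfl⟩
    exact pow_le_pow_left' (Submodule.span_le.2 (by rintro _ ⟨i, rfl⟩; exact hy i)) n h1
  have h2 : LinearIndependent k (fun m : Finset.Nat.antidiagonalTuple (b + 1) n =>
      auxMon y m.1) := by
    generalize Finset.Nat.antidiagonalTuple (b + 1) n = F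
    have h3 : Function.Injective (fun m : F => Finsupp.equivFunOnFinite.symm m.1) := by
      intro m m' h
      exact Subtype.ext (Finsupp.equivFunOnFinite.symm.injective h)
    have h5 := hi.comp _ h3
    simpa only [Function.comp_def, Finsupp.coe_equivFunOnFinite_symm] using h5
  have h4 := finrank_span_eq_card h2
  rw [Fintype.card_coe] at h4
  rw [← h4]
  refine Submodule.finrank_mono (Submodule.span_le.2 ?_)
  rintro _ ⟨m, rfl⟩
  exact hmem m.1 (Finset.Nat.mem_antidiagonalTuple.1 m.2)

theorem aux_poly_lim (P : Polynomial ℚ) (b : ℕ) (hP : P.degree < (b + 1 : ℕ)) :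
    Tendsto (fun n : ℕ => ((P.eval (n : ℚ) : ℚ) : ℝ) / (n : ℝ) ^ b) atTop
      (nhds ((P.coeff b : ℚ) : ℝ)) := by
  let Q : Polynomial ℝ := P.map (algebraMap ℚ ℝ)
  have hQ : Q.degree < (b + 1 : ℕ) := by
    simpa [Q, Polynomial.degree_map] using hP
  have hX : (Polynomial.X ^ b : Polynomial ℝ).degree = b := Polynomial.degree_X_pow b
  have key : Tendsto (fun t : ℝ => Q.eval t / (Polynomial.X ^ b : Polynomial ℝ).eval t) atTop
      (nhds (Q.coeff b)) := by
    rcases lt_or_eq_of_le (Polynomial.degree_le_iff_coeff_zero Q b |>.2 fun m hm =>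
      Polynomial.coeff_eq_zero_of_degree_lt (hQ.trans_le (by exact_mod_cast hm))) with h | h
    · rw [Polynomial.coeff_eq_zero_of_degree_lt h]
      exact Polynomial.div_tendsto_atTop_zero_of_degree_lt _ _ (by rw [hX]; exact h)
    · have := Polynomial.div_tendsto_atTop_leadingCoeff_div_of_degree_eq Q (Polynomial.X ^ b)
        (by rw [hX]; exact h)
      rw [Polynomial.leadingCoeff_X_pow, div_one] at this
      rwa [Polynomial.leadingCoeff, Polynomial.natDegree_eq_of_degree_eq_some h] at this
  have := key.comp tendsto_natCast_atTop_atTop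
  have e : Q.coeff b = ((P.coeff b : ℚ) : ℝ) := by simp [Q]
  rw [e] at this
  refine this.congr fun n => ?_
  simp only [Function.comp, Q, Polynomial.eval_pow, Polynomial.eval_X]
  congr 1
  have := Polynomial.eval_map_algebraMap (R := ℚ) (B := ℝ) P (n : ℝ)
  rw [Polynomial.eval_natCast_map]
  simp

theorem aux_hilbert {k A : Type*} [Field k] [CommRing A] [IsDomain A] [Algebra k A]
    (𝒜 : ℕ → Submodule k A) [GradedAlgebra 𝒜] (p : ℕ) (hp : 0 < p)
    (hfd : FiniteDimensional k (𝒜 p)) (hne : 𝒜 p ≠ ⊥) :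
    ∃ b : ℕ, ringKrullDim (Algebra.adjoin k (𝒜 p : Set A)) = ((b + 1 : ℕ) : WithBot ℕ∞) ∧
      ∃ l : ℝ, 0 < l ∧ Tendsto (fun n : ℕ =>
        (Module.finrank k ((𝒜 p) ^ n : Submodule k A) : ℝ) / (n : ℝ) ^ b) atTop (nhds l) := by
  classical
  obtain ⟨s, x, hx⟩ : ∃ (s : ℕ) (x : Fin s → A), Submodule.span k (Set.range x) = 𝒜 p :=
    Submodule.fg_iff_exists_fin_generating_family.1 (Module.Finite.iff_fg.1 hfd)
  have hxm : ∀ i, x i ∈ 𝒜 p := fun i => hx ▸ Submodule.subset_span ⟨i, rfl⟩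
  have hadj : Algebra.adjoin k (𝒜 p : Set A) = Algebra.adjoin k (Set.range x) := by
    rw [← hx, Algebra.adjoin_span]
  rw [hadj]
  set R := Algebra.adjoin k (Set.range x) with hR
  let xR : Fin s → R := fun i => ⟨x i, Algebra.subset_adjoin ⟨i, rfl⟩⟩
  have htop : Algebra.adjoin k (Set.range xR) = ⊤ := by
    have := Algebra.adjoin_adjoin_coe_preimage (R := k) (s := Set.range x)
    rw [← this]
    congr 1
    ext r
    constructor
    · rintro ⟨i, rfl⟩
      exact ⟨i, rfl⟩
    · rintro ⟨i, hi⟩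
      exact ⟨i, Subtype.ext hi⟩
  have hft : Algebra.FiniteType k R :=
    (Subalgebra.fg_iff_finiteType _).1 (Subalgebra.fg_def.2 ⟨_, Set.finite_range x, rfl⟩)
  obtain ⟨a, ha1, ha2⟩ := aux_dim_trdeg k R
  have hface : ∀ T : Finset (Fin s), (∀ y : Fin s → ℕ, (∀ i ∉ T, y i = 0) → y ∈ auxStd k x) →
      T.card ≤ a := by
    intro T hT
    have h1 := aux_face 𝒜 p hp x hxm T hT
    have h2 : AlgebraicIndependent k (fun i : T => xR i) :=
      AlgebraicIndependent.of_comp R.val h1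
    have h3 := h2.lift_cardinalMk_le_trdeg
    rw [ha2] at h3
    simpa using h3
  obtain ⟨P, hP1, hP2⟩ := aux_comb s (auxStd k x) (auxStd_lower k x) a hface
  have hP3 : ∀ᶠ n : ℕ in atTop,
      (Module.finrank k ((𝒜 p) ^ n : Submodule k A) : ℚ) = P.eval (n : ℚ) := by
    filter_upwards [hP2] with n hn
    rw [← hn, ← auxStd_finrank, hx]
  have hpos : ∀ n, 0 < Module.finrank k ((𝒜 p) ^ n : Submodule k A) := by
    intro n
    have hfd' : FiniteDimensional k ((𝒜 p) ^ n : Submodule k A) :=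
      Module.Finite.iff_fg.2 (Submodule.FG.pow (Module.Finite.iff_fg.1 hfd) n)
    obtain ⟨z, hz, hz0⟩ := Submodule.exists_mem_ne_zero_of_ne_bot hne
    have h1 : z ^ n ∈ (𝒜 p) ^ n := Submodule.pow_mem_pow _ hz n
    have : Nontrivial ((𝒜 p) ^ n : Submodule k A) :=
      ⟨⟨z ^ n, h1⟩, 0, fun h => pow_ne_zero n hz0 (congrArg Subtype.val h)⟩
    exact Module.finrank_pos
  obtain ⟨b, rfl⟩ : ∃ b, a = b + 1 := by
    refine Nat.exists_eq_succ_of_ne_zero ?_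
    rintro rfl
    have : P = 0 := by
      have h : P.degree < 0 := by simpa using hP1
      exact Polynomial.degree_eq_bot.1 (Nat.WithBot.lt_zero_iff.1 h)
    obtain ⟨n, hn⟩ := hP3.exists
    rw [this, Polynomial.eval_zero] at hn
    have := hpos n
    have h0 : Module.finrank k ((𝒜 p) ^ n : Submodule k A) = 0 := by exact_mod_cast hn
    omega
  refine ⟨b, ha1, ((P.coeff b : ℚ) : ℝ), ?_⟩
  have hlim : Tendsto (fun n : ℕ =>
        (Module.finrank k ((𝒜 p) ^ n : Submodule k A) : ℝ) / (n : ℝ) ^ b) atTop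
        (nhds ((P.coeff b : ℚ) : ℝ)) := by
    refine (aux_poly_lim P b hP1).congr' ?_
    filter_upwards [hP3] with n hn
    rw [← hn]
    simp
  refine ⟨?_, hlim⟩
  -- a transcendence basis among the generators
  have halg : Algebra.IsAlgebraic (Algebra.adjoin k (Set.range xR)) R := by
    constructor
    intro r
    have hr : r ∈ Algebra.adjoin k (Set.range xR) := by rw [htop]; trivial
    exact isAlgebraic_algebraMap (⟨r, hr⟩ : Algebra.adjoin k (Set.range xR))
  obtain ⟨t, ht1, ht2⟩ := exists_isTranscendenceBasis_subset (R := k) (Set.range xR)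
  have hcard := ht2.cardinalMk_eq_trdeg
  rw [ha2] at hcard
  have e : Nonempty (Fin (b + 1) ≃ t) := by
    have h1 : Cardinal.mk t = ((b + 1 : ℕ) : Cardinal) := hcard
    have : Finite t := Cardinal.lt_aleph0_iff_finite.1 (h1 ▸ Cardinal.natCast_lt_aleph0)
    have h2 : Nat.card t = b + 1 := by rw [Nat.card, h1, Cardinal.toNat_natCast]
    exact ⟨(Finite.equivFinOfCardEq h2).symm⟩
  obtain ⟨e⟩ := e
  have hy : AlgebraicIndependent k (R.val ∘ (fun i : Fin (b + 1) => (e i : R))) :=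
    (AlgHom.algebraicIndependent_iff R.val Subtype.val_injective).2 (ht2.1.comp e e.injective)
  have hym : ∀ i, (R.val ∘ (fun i : Fin (b + 1) => (e i : R))) i ∈ 𝒜 p := by
    intro i
    obtain ⟨j, hj⟩ := ht1 (e i).2
    have : (R.val ∘ (fun i : Fin (b + 1) => (e i : R))) i = x j := by
      simp only [Function.comp, ← hj]; rfl
    rw [this]; exact hxm j
  have hlow := aux_lower (𝒜 p) b _ hym hy
  have hge : (1 / ((b : ℝ) + 1)) ^ b ≤ ((P.coeff b : ℚ) : ℝ) := by
    refine ge_of_tendsto hlim ?_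
    filter_upwards [eventually_gt_atTop 0] with n hn
    have hn' : (0 : ℝ) < n := by exact_mod_cast hn
    rw [le_div_iff₀ (by positivity), ← mul_pow]
    have h1 : (n : ℝ) / (b + 1) ≤ ((n / (b + 1) + 1 : ℕ) : ℝ) := by
      rw [div_le_iff₀ (by positivity)]
      have := Nat.lt_mul_div_succ n (Nat.succ_pos b)
      have h2 : n ≤ (n / (b + 1) + 1) * (b + 1) := by
        rw [mul_comm]; exact this.le
      exact_mod_cast h2
    calc (1 / ((b : ℝ) + 1) * n) ^ b = ((n : ℝ) / (b + 1)) ^ b := by ring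
      _ ≤ ((n / (b + 1) + 1 : ℕ) : ℝ) ^ b := by gcongr
      _ ≤ _ := by exact_mod_cast hlow n
  exact lt_of_lt_of_le (by positivity) hge

theorem aux_comp_lim (h : ℕ → ℝ) (b : ℕ) (l c : ℝ) (q : ℕ → ℕ)
    (hl : Tendsto (fun n : ℕ => h n / (n : ℝ) ^ b) atTop (nhds l))
    (hq : Tendsto q atTop atTop)
    (hc : Tendsto (fun n : ℕ => (q n : ℝ) / (n : ℝ)) atTop (nhds c)) :
    Tendsto (fun n : ℕ => h (q n) / (n : ℝ) ^ b) atTop (nhds (l * c ^ b)) := by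
  have h1 := (hl.comp hq).mul (hc.pow b)
  refine h1.congr' ?_
  filter_upwards [hq.eventually_gt_atTop 0] with n hn
  have : (q n : ℝ) ≠ 0 := by exact_mod_cast hn.ne'
  simp only [Function.comp]
  rw [div_pow]
  field_simp

theorem aux_ratio (p C : ℕ) (hp : 0 < p) (q : ℕ → ℕ)
    (h1 : ∀ᶠ n in atTop, n ≤ q n * p + C) (h2 : ∀ᶠ n in atTop, q n * p ≤ n + C) :
    Tendsto q atTop atTop ∧
      Tendsto (fun n : ℕ => (q n : ℝ) / (n : ℝ)) atTop (nhds (1 / (p : ℝ))) := by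
  constructor
  · rw [tendsto_atTop]
    intro N
    filter_upwards [h1, eventually_ge_atTop (N * p + C)] with n hn hn2
    by_contra! hlt
    have : q n * p < N * p := Nat.mul_lt_mul_of_pos_right hlt hp
    omega
  · have hp' : (0 : ℝ) < p := by exact_mod_cast hp
    have h0 : Tendsto (fun n : ℕ => (C : ℝ) / p / (n : ℝ)) atTop (nhds 0) :=
      tendsto_const_div_atTop_nhds_zero_nat _
    refine tendsto_of_tendsto_of_tendsto_of_le_of_le'
      (g := fun n : ℕ => 1 / (p : ℝ) - (C : ℝ) / p / (n : ℝ))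
      (h := fun n : ℕ => 1 / (p : ℝ) + (C : ℝ) / p / (n : ℝ)) ?_ ?_ ?_ ?_
    · simpa using h0.const_sub (1 / (p : ℝ))
    · simpa using h0.const_add (1 / (p : ℝ))
    · filter_upwards [h1, eventually_gt_atTop 0] with n hn hn0
      have hn0' : (0 : ℝ) < n := by exact_mod_cast hn0
      have hn' : (n : ℝ) ≤ q n * p + C := by exact_mod_cast hn
      rw [le_div_iff₀ hn0']
      have : (1 / (p : ℝ) - (C : ℝ) / p / (n : ℝ)) * n = (n - C) / p := by field_simp
      rw [this, div_le_iff₀ hp']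
      linarith
    · filter_upwards [h2, eventually_gt_atTop 0] with n hn hn0
      have hn0' : (0 : ℝ) < n := by exact_mod_cast hn0
      have hn' : (q n * p : ℝ) ≤ n + C := by exact_mod_cast hn
      rw [div_le_iff₀ hn0']
      have : (1 / (p : ℝ) + (C : ℝ) / p / (n : ℝ)) * n = (n + C) / p := by field_simp
      rw [this, le_div_iff₀ hp']
      linarith

theorem aux_sandwich (f h : ℕ → ℝ) (b m₀ p : ℕ) (hp : 0 < p) (l ε : ℝ)
    (hε : ε < 1)
    (hmono : ∀ n r, m₀ ≤ r → f n ≤ f (n + r))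
    (hl : Tendsto (fun n : ℕ => h n / (n : ℝ) ^ b) atTop (nhds l))
    (h1 : ∀ n, h n ≤ f (n * p))
    (h2 : ∀ᶠ n in atTop, (1 - ε) * f (n * p) ≤ h n) (δ : ℝ) (hδ : 0 < δ) :
    ∀ᶠ n : ℕ in atTop, l * (1 / (p : ℝ)) ^ b - δ ≤ f n / (n : ℝ) ^ b ∧
      f n / (n : ℝ) ^ b ≤ l * (1 / (p : ℝ)) ^ b / (1 - ε) + δ := by
  have hε' : 0 < 1 - ε := by linarith
  have a1 := aux_ratio p (m₀ + p) hp (fun n => (n - m₀) / p)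
    (Eventually.of_forall fun n => by
      have := Nat.lt_div_mul_add (a := n - m₀) hp
      omega)
    (Eventually.of_forall fun n => by
      have := Nat.div_mul_le_self (n - m₀) p
      omega)
  have a2 := aux_ratio p (m₀ + p) hp (fun n => (n + m₀) / p + 1)
    (Eventually.of_forall fun n => by
      have := Nat.lt_div_mul_add (a := n + m₀) hp
      rw [add_mul, one_mul]
      omega)
    (Eventually.of_forall fun n => by
      have := Nat.div_mul_le_self (n + m₀) p
      rw [add_mul, one_mul]
      omega)
  have t1 := aux_comp_lim h b l _ _ hl a1.1 a1.2
  have t2 := (aux_comp_lim h b l _ _ hl a2.1 a2.2).div_const (1 - ε)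
  filter_upwards [t1.eventually_const_le (sub_lt_self _ hδ),
    t2.eventually_le_const (lt_add_of_pos_right _ hδ),
    a2.1.eventually h2, eventually_ge_atTop m₀] with n e1 e2 e3 e4
  constructor
  · refine e1.trans ?_
    refine div_le_div_of_nonneg_right ?_ (by positivity)
    refine (h1 _).trans ?_
    have := Nat.div_mul_le_self (n - m₀) p
    have e : n = (n - m₀) / p * p + (n - (n - m₀) / p * p) := by omega
    conv_rhs => rw [e]
    exact hmono _ _ (by omega)
  · refine le_trans ?_ e2
    rw [div_right_comm]
    refine div_le_div_of_nonneg_right ?_ (by positivity)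
    rw [le_div_iff₀ hε', mul_comm]
    refine le_trans ?_ e3
    refine mul_le_mul_of_nonneg_left ?_ hε'.le
    have := Nat.lt_div_mul_add (a := n + m₀) hp
    have e : ((n + m₀) / p + 1) * p = n + (((n + m₀) / p + 1) * p - n) := by
      rw [add_mul, one_mul]; omega
    rw [e]
    refine hmono _ _ ?_
    rw [add_mul, one_mul]; omega

theorem aux_converge (f : ℕ → ℝ) (b m₀ : ℕ) (hf : ∀ n, 0 ≤ f n)
    (hmono : ∀ n r, m₀ ≤ r → f n ≤ f (n + r))
    (H : ∀ ε : ℝ, 0 < ε → ε < 1 → ∃ p : ℕ, 0 < p ∧ ∃ (h : ℕ → ℝ) (l : ℝ), 0 < l ∧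
      Tendsto (fun n : ℕ => h n / (n : ℝ) ^ b) atTop (nhds l) ∧
      (∀ n, h n ≤ f (n * p)) ∧ (∀ᶠ n in atTop, (1 - ε) * f (n * p) ≤ h n)) :
    ∃ L : ℝ, 0 ≤ L ∧ Tendsto (fun n : ℕ => f n / (n : ℝ) ^ b) atTop (nhds L) := by
  have H' : ∀ ε : ℝ, 0 < ε → ε < 1 → ∃ c : ℝ, 0 < c ∧ ∀ δ : ℝ, 0 < δ → ∀ᶠ n : ℕ in atTop,
      c - δ ≤ f n / (n : ℝ) ^ b ∧ f n / (n : ℝ) ^ b ≤ c / (1 - ε) + δ := by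
    intro ε h0 h1
    obtain ⟨p, hp, h, l, hl, H1, H2, H3⟩ := H ε h0 h1
    have hp' : (0 : ℝ) < p := by exact_mod_cast hp
    exact ⟨l * (1 / (p : ℝ)) ^ b, by positivity, fun δ hδ =>
      aux_sandwich f h b m₀ p hp l ε h1 hmono H1 H2 H3 δ hδ⟩
  obtain ⟨c₀, hc₀, H₀⟩ := H' (1 / 2) (by norm_num) (by norm_num)
  have hM := H₀ 1 one_pos
  set M := c₀ / (1 - 1 / 2) + 2 with hMdef
  have hMpos : 0 < M := by rw [hMdef]; norm_num; positivity
  have hcau : CauchySeq (fun n : ℕ => f n / (n : ℝ) ^ b) := by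
    rw [Metric.cauchySeq_iff']
    intro η hη
    let ε : ℝ := min (1 / 2) (η / (8 * M))
    have hε0 : 0 < ε := lt_min (by norm_num) (by positivity)
    have hε1 : ε ≤ 1 / 2 := min_le_left _ _
    have hε2 : ε ≤ η / (8 * M) := min_le_right _ _
    obtain ⟨c, hc, Hc⟩ := H' ε hε0 (by linarith)
    have hcM : c ≤ M := by
      obtain ⟨n, hn1, hn2⟩ := (hM.and (Hc 1 one_pos)).exists
      linarith [hn1.2, hn2.1]
    have hgap : c / (1 - ε) ≤ c + η / 4 := by
      rw [div_le_iff₀ (by linarith)]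
      have h1 : ε * (8 * M) ≤ η := by rwa [le_div_iff₀ (by positivity)] at hε2
      have h2 : c * ε ≤ M * ε := by gcongr
      have h3 : η * ε ≤ η * (1 / 2) := by gcongr
      nlinarith
    obtain ⟨N, hN⟩ := eventually_atTop.1 (Hc (η / 8) (by positivity))
    refine ⟨N, fun n hn => ?_⟩
    have k1 := hN n hn
    have k2 := hN N le_rfl
    rw [Real.dist_eq, abs_lt]
    constructor <;> linarith [k1.1, k1.2, k2.1, k2.2]
  obtain ⟨L, hL⟩ := cauchySeq_tendsto_of_complete hcau
  exact ⟨L, ge_of_tendsto' hL fun n => div_nonneg (hf n) (by positivity), hL⟩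

theorem aux_exp_le (u v : ℕ → ℝ) (b c p q : ℕ) (hp : 0 < p) (hq : 0 < q) (l l' C : ℝ)
    (hl : 0 < l)
    (hu : Tendsto (fun n : ℕ => u n / (n : ℝ) ^ b) atTop (nhds l))
    (hv : Tendsto (fun n : ℕ => v n / (n : ℝ) ^ c) atTop (nhds l'))
    (h : ∀ᶠ n : ℕ in atTop, u (n * p) ≤ C * v (n * q)) : b ≤ c := by
  by_contra! hlt
  have hr : ∀ p : ℕ, 0 < p → Tendsto (fun n : ℕ => n * p) atTop atTop ∧
      Tendsto (fun n : ℕ => ((n * p : ℕ) : ℝ) / (n : ℝ)) atTop (nhds (p : ℝ)) := by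
    intro p hp
    refine ⟨tendsto_id.atTop_mul_const' hp, ?_⟩
    refine tendsto_const_nhds.congr' ?_
    filter_upwards [eventually_gt_atTop 0] with n hn
    have : (n : ℝ) ≠ 0 := by exact_mod_cast hn.ne'
    push_cast
    field_simp
  have t1 := aux_comp_lim u b l p _ hu (hr p hp).1 (hr p hp).2
  have t2 := aux_comp_lim v c l' q _ hv (hr q hq).1 (hr q hq).2
  obtain ⟨d, rfl⟩ : ∃ d, b = c + (d + 1) := ⟨b - c - 1, by omega⟩
  have t3 : Tendsto (fun n : ℕ => 1 / (n : ℝ) ^ (d + 1)) atTop (nhds 0) := by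
    have := (tendsto_one_div_atTop_nhds_zero_nat (𝕜 := ℝ)).pow (d + 1)
    simpa [div_pow] using this
  have t4 := (t2.mul t3).const_mul C
  rw [mul_zero, mul_zero] at t4
  have := le_of_tendsto_of_tendsto t1 t4 (by
    filter_upwards [h] with n hn
    calc u (n * p) / (n : ℝ) ^ (c + (d + 1)) ≤ C * v (n * q) / (n : ℝ) ^ (c + (d + 1)) := by
          gcongr
      _ = _ := by rw [pow_add, mul_div_assoc, div_mul_div_comm, mul_one])
  have hp' : (0 : ℝ) < p := by exact_mod_cast hp
  have : 0 < l * (p : ℝ) ^ (c + (d + 1)) := by positivity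
  linarith

theorem chen_dimension_and_volume_exist
    (k : Type*) {A : Type*} [Field k] [CommRing A] [IsDomain A] [Algebra k A]
    (𝒜 : ℕ → Submodule k A) [GradedAlgebra 𝒜]
    (hB : IsApproximable k 𝒜) :
    ∃ a : ℕ, 0 < a ∧
      (∀ᶠ p in atTop, ringKrullDim (Algebra.adjoin k (𝒜 p : Set A)) = a) ∧
      ∃ L : ℝ, 0 ≤ L ∧
        Tendsto (fun n : ℕ =>
          (Module.finrank k (𝒜 n) : ℝ) / (n : ℝ) ^ (a - 1)) atTop (nhds L) := by
  obtain ⟨h0, hmul, hfd, hne, happ⟩ := hB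
  obtain ⟨m₀, hm₀⟩ := eventually_atTop.1 hne
  have hpowle : ∀ p n, (𝒜 p) ^ n ≤ 𝒜 (n * p) := by
    intro p n
    induction n with
    | zero => rw [pow_zero, zero_mul, h0]
    | succ n ih =>
      rw [pow_succ, add_mul, one_mul]
      exact (mul_le_mul_left ih _).trans (hmul _ _)
  have hhf : ∀ p n, Module.finrank k ((𝒜 p) ^ n : Submodule k A) ≤
      Module.finrank k (𝒜 (n * p)) := by
    intro p n
    have := hfd (n * p)
    exact Submodule.finrank_mono (hpowle p n)
  have hmono : ∀ n r, m₀ ≤ r → (Module.finrank k (𝒜 n) : ℝ) ≤ Module.finrank k (𝒜 (n + r)) := by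
    intro n r hr
    obtain ⟨z, hz, hz0⟩ := Submodule.exists_mem_ne_zero_of_ne_bot (hm₀ r hr)
    have := hfd (n + r)
    have h1 : Module.finrank k (Submodule.map (LinearMap.mulLeft k z) (𝒜 n)) =
        Module.finrank k (𝒜 n) :=
      (Submodule.equivMapOfInjective _ (mul_right_injective₀ hz0) _).finrank_eq.symm
    rw [← h1]
    have h2 : Submodule.map (LinearMap.mulLeft k z) (𝒜 n) ≤ 𝒜 (n + r) := by
      rintro _ ⟨y, hy, rfl⟩
      rw [LinearMap.mulLeft_apply, mul_comm]
      exact hmul _ _ (Submodule.mul_mem_mul hy hz)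
    exact_mod_cast Submodule.finrank_mono h2
  have happ' : ∀ ε : ℝ, 0 < ε → ∃ p₀ : ℕ, ∀ p ≥ p₀, ∀ᶠ n in atTop,
      (1 - ε) * (Module.finrank k (𝒜 (n * p)) : ℝ) ≤
        Module.finrank k ((𝒜 p) ^ n : Submodule k A) := by
    intro ε hε
    obtain ⟨p₀, hp₀⟩ := happ ε hε
    refine ⟨p₀, fun p hp => ?_⟩
    have h1 := eventually_lt_of_lt_liminf (hp₀ p hp)
      (isBoundedUnder_of ⟨0, fun n => by positivity⟩)
    filter_upwards [h1] with n hn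
    rcases (Nat.cast_nonneg (α := ℝ) (Module.finrank k (𝒜 (n * p)))).eq_or_lt with h | h
    · rw [← h, mul_zero]; positivity
    · exact ((lt_div_iff₀ h).1 hn).le
  have hil := fun p (hp : 0 < p) (hp2 : m₀ ≤ p) => aux_hilbert 𝒜 p hp (hfd p) (hm₀ p hp2)
  obtain ⟨p₁, hp₁⟩ := happ' (1 / 2) (by norm_num)
  let p₂ := max (max m₀ p₁) 1
  have hp2m : m₀ ≤ p₂ := (le_max_left _ _).trans (le_max_left _ _)
  have hp2p : p₁ ≤ p₂ := (le_max_right _ _).trans (le_max_left _ _)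
  have hp21 : 1 ≤ p₂ := le_max_right _ _
  obtain ⟨b, hb, l, hl, hlim⟩ := hil p₂ hp21 hp2m
  -- comparison of growth exponents
  have hcmp : ∀ p q : ℕ, 0 < p → 0 < q → p₁ ≤ p → ∀ b c : ℕ, ∀ l l' : ℝ, 0 < l →
      Tendsto (fun n : ℕ => (Module.finrank k ((𝒜 q) ^ n : Submodule k A) : ℝ) / (n : ℝ) ^ b)
        atTop (nhds l) →
      Tendsto (fun n : ℕ => (Module.finrank k ((𝒜 p) ^ n : Submodule k A) : ℝ) / (n : ℝ) ^ c)
        atTop (nhds l') → b ≤ c := by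
    intro p q hp hq hpp b c l l' hl hu hv
    refine aux_exp_le _ _ b c p q hp hq l l' 2 hl hu hv ?_
    have ht : Tendsto (fun n : ℕ => n * q) atTop atTop := tendsto_id.atTop_mul_const' hq
    filter_upwards [ht.eventually (hp₁ p hpp)] with n hn
    have h1 : (Module.finrank k ((𝒜 q) ^ (n * p) : Submodule k A) : ℝ) ≤
        Module.finrank k (𝒜 (n * q * p)) := by
      have := hhf q (n * p)
      rw [show n * p * q = n * q * p by ring] at this
      exact_mod_cast this
    linarith
  have hall : ∀ p, p₂ ≤ p →
      ringKrullDim (Algebra.adjoin k (𝒜 p : Set A)) = ((b + 1 : ℕ) : WithBot ℕ∞) ∧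
      ∃ l : ℝ, 0 < l ∧ Tendsto (fun n : ℕ =>
        (Module.finrank k ((𝒜 p) ^ n : Submodule k A) : ℝ) / (n : ℝ) ^ b) atTop (nhds l) := by
    intro p hp
    have hp0 : 0 < p := lt_of_lt_of_le hp21 hp
    obtain ⟨c, hc, l', hl', hlim'⟩ := hil p hp0 (hp2m.trans hp)
    have e1 : b ≤ c := hcmp p p₂ hp0 hp21 (hp2p.trans hp) b c l l' hl hlim hlim'
    have e2 : c ≤ b := hcmp p₂ p hp21 hp0 hp2p c b l' l hl' hlim' hlim
    obtain rfl : b = c := le_antisymm e1 e2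
    exact ⟨hc, l', hl', hlim'⟩
  refine ⟨b + 1, Nat.succ_pos b, ?_, ?_⟩
  · filter_upwards [eventually_ge_atTop p₂] with p hp
    exact (hall p hp).1
  · rw [Nat.add_sub_cancel]
    refine aux_converge (fun n => (Module.finrank k (𝒜 n) : ℝ)) b m₀ (fun n => by positivity)
      hmono fun ε hε _ => ?_
    obtain ⟨p₀, hp₀⟩ := happ' ε hε
    let p := max p₀ p₂
    obtain ⟨_, l', hl', hlim'⟩ := hall p (le_max_right _ _)
    refine ⟨p, lt_of_lt_of_le hp21 (le_max_right _ _),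
      fun n => (Module.finrank k ((𝒜 p) ^ n : Submodule k A) : ℝ), l', hl', hlim', ?_,
      hp₀ p (le_max_left _ _)⟩
    intro n
    exact Nat.cast_le.2 (hhf p n)
end

section
/- Let k be an algebraically closed field of characteristic zero, B = ⊕_{m≥0} B_m an approximable graded algebra over k, and p ≥ 1 an integer with B_p ≠ 0 such that liminf_{n→∞} dim_k(S^n(B_p)) / dim_k(B_{np}) > 2/3. Then the homogeneous fraction field K^hom(B) is generated as a field extension of k by the fractions of equal-degree elements of ⟨B_p⟩; that is, K^hom(B) = K^hom(⟨B_p⟩). -/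
open Filter

/-- The homogeneous fraction field `K^hom(B)` of a graded algebra `B = ⊕ ℬ m ⊆ A`,
viewed inside a fraction field `F` of `A`: the subfield of `F` generated over `k` by all
fractions `b₁ / b₂` with `b₁, b₂ ∈ ℬ m` for some common `m` and `b₂ ≠ 0`. -/
noncomputable def homogeneousFractionField (k : Type*) {A F : Type*} [Field k] [CommRing A]
    [IsDomain A] [Algebra k A] [Field F] [Algebra A F] [IsFractionRing A F] [Algebra k F]
    [IsScalarTower k A F] (ℬ : ℕ → Submodule k A) : IntermediateField k F :=
  IntermediateField.adjoin k
    {x : F | ∃ m : ℕ, ∃ b₁ ∈ ℬ m, ∃ b₂ ∈ ℬ m, b₂ ≠ 0 ∧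
      x = algebraMap A F b₁ / algebraMap A F b₂}

/-- The powers of a finite-dimensional subspace have polynomially bounded dimension. -/
theorem finrank_pow_le_poly {k A : Type*} [Field k] [CommRing A] [Algebra k A]
    (V : Submodule k A) [FiniteDimensional k V] :
    ∃ N : ℕ, ∀ n : ℕ, Module.finrank k (V ^ n : Submodule k A) ≤ (n + 1) ^ N := by
  classical
  obtain ⟨N, e, he⟩ := Submodule.fg_iff_exists_fin_generating_family.mp
    (Module.Finite.iff_fg.mp (inferInstance : Module.Finite k V))
  refine ⟨N, fun n => ?_⟩
  let g : (Fin N → ℕ) → A := fun c => ∏ i, e i ^ c i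
  let T : Finset A := (Fintype.piFinset (fun _ : Fin N => Finset.range (n + 1))).image g
  have key : ∀ m : ℕ, V ^ m ≤ Submodule.span k (g '' {c | ∀ i, c i ≤ m}) := by
    intro m
    induction m with
    | zero =>
      rw [pow_zero, Submodule.one_eq_span]
      refine Submodule.span_mono ?_
      intro x hx
      refine ⟨0, by simp, ?_⟩
      simpa [g] using hx.symm
    | succ m ih =>
      rw [pow_succ]
      refine (mul_le_mul' ih he.ge).trans ?_
      rw [Submodule.span_mul_span]
      refine Submodule.span_mono ?_
      rintro _ ⟨_, ⟨c, hc, rfl⟩, _, ⟨j, rfl⟩, rfl⟩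
      refine ⟨c + Pi.single j 1, ?_, ?_⟩
      · intro i
        have := hc i
        by_cases h : i = j
        · subst h; simp; exact this
        · simp [h]; omega
      · simp only [g, Pi.add_apply, pow_add, Finset.prod_mul_distrib]
        congr 1
        rw [Finset.prod_eq_single j]
        · simp
        · intro b _ hb; simp [hb]
        · simp
  have h1 : V ^ n ≤ Submodule.span k (T : Set A) := by
    refine (key n).trans (Submodule.span_mono ?_)
    rintro _ ⟨c, hc, rfl⟩
    simp only [T, Finset.coe_image]
    refine ⟨c, ?_, rfl⟩
    simp only [Finset.mem_coe, Fintype.mem_piFinset, Finset.mem_range]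
    exact fun i => Nat.lt_succ_of_le (hc i)
  calc Module.finrank k (V ^ n : Submodule k A)
      ≤ Module.finrank k (Submodule.span k (T : Set A)) := by
        have : FiniteDimensional k (Submodule.span k (T : Set A)) :=
          FiniteDimensional.span_finset k T
        exact Submodule.finrank_mono h1
    _ ≤ T.card := finrank_span_finset_le_card T
    _ ≤ _ := Finset.card_image_le
    _ = (n + 1) ^ N := by simp

/-- A sequence of positive numbers that is polynomially bounded cannot satisfy
`d (n + r) ≥ (4/3) d n` eventually. -/
theorem no_exp_growth (d : ℕ → ℕ) (N : ℕ) (hd : ∀ n, d n ≤ (n + 1) ^ N) (hpos : ∀ n, 1 ≤ d n)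
    (r n₀ : ℕ) (h : ∀ n ≥ n₀, (4 / 3 : ℝ) * d n ≤ d (n + r)) : False := by
  have h1 : ∀ j : ℕ, (4 / 3 : ℝ) ^ j ≤ d (n₀ + j * r) := by
    intro j
    induction j with
    | zero => simpa using hpos n₀
    | succ j ih =>
      have := h (n₀ + j * r) (by omega)
      have e : n₀ + (j + 1) * r = n₀ + j * r + r := by ring
      rw [e, pow_succ]
      linarith
  have h2 : ∀ j : ℕ, 1 ≤ j → (4 / 3 : ℝ) ^ j ≤ ((n₀ + r + 1 : ℕ) : ℝ) ^ N * (j : ℝ) ^ N := by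
    intro j hj
    refine (h1 j).trans ?_
    have h3 : n₀ + j * r + 1 ≤ (n₀ + r + 1) * j := by nlinarith
    have h4 : d (n₀ + j * r) ≤ ((n₀ + r + 1) * j) ^ N :=
      (hd _).trans (Nat.pow_le_pow_left h3 N)
    rw [← mul_pow]
    exact_mod_cast h4
  have ht := tendsto_pow_const_div_const_pow_of_one_lt N (show (1 : ℝ) < 4 / 3 by norm_num)
  have hC : (0 : ℝ) < ((n₀ + r + 1 : ℕ) : ℝ) ^ N := by positivity
  have hev := ht.eventually (gt_mem_nhds (inv_pos.mpr hC))
  obtain ⟨j, hj, hj1⟩ := (hev.and (eventually_ge_atTop 1)).exists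
  have h5 := h2 j hj1
  have hp : (0 : ℝ) < (4 / 3 : ℝ) ^ j := by positivity
  rw [div_lt_iff₀ hp, inv_mul_eq_div, lt_div_iff₀ hC] at hj
  linarith

/-- Let `k` be an algebraically closed field of characteristic zero, `B = ⊕ B_m` an
approximable graded algebra over `k`, and `p ≥ 1` an integer with `B_p ≠ 0` such that
`liminf_n dim_k (S^n(B_p)) / dim_k (B_{np}) > 2/3`.  Then the homogeneous fraction field
`K^hom(B)` is generated as a field extension of `k` by the fractions of equal-degree
elements of `⟨B_p⟩` (whose graded piece of degree `np` is `S^n(B_p) = (B_p)^n`); that is,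
`K^hom(B) = K^hom(⟨B_p⟩)`. -/
theorem homogeneousFractionField_eq_of_liminf_gt
    (k : Type*) {A F : Type*} [Field k] [IsAlgClosed k] [CharZero k]
    [CommRing A] [IsDomain A] [Algebra k A]
    [Field F] [Algebra A F] [IsFractionRing A F] [Algebra k F] [IsScalarTower k A F]
    (𝒜 : ℕ → Submodule k A) [GradedAlgebra 𝒜]
    (hB : IsApproximable k 𝒜)
    (p : ℕ) (hp : 1 ≤ p) (hpne : 𝒜 p ≠ ⊥)
    (hliminf : (2 : ℝ) / 3 < liminf (fun n : ℕ =>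
      (Module.finrank k ((𝒜 p) ^ n : Submodule k A) : ℝ) /
        (Module.finrank k (𝒜 (n * p)) : ℝ)) atTop) :
    homogeneousFractionField k 𝒜 (F := F) =
      IntermediateField.adjoin k
        {x : F | ∃ n : ℕ, ∃ b₁ ∈ ((𝒜 p) ^ n : Submodule k A),
          ∃ b₂ ∈ ((𝒜 p) ^ n : Submodule k A), b₂ ≠ 0 ∧
            x = algebraMap A F b₁ / algebraMap A F b₂} := by
  classical
  obtain ⟨h0, hmul, hfin, -, -⟩ := hB
  have hpow : ∀ m n : ℕ, (𝒜 m) ^ n ≤ 𝒜 (n * m) := by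
    intro m n
    induction n with
    | zero => rw [pow_zero, Nat.zero_mul, h0]
    | succ n ih =>
      rw [pow_succ, Nat.succ_mul]
      exact (mul_le_mul' ih le_rfl).trans (hmul _ _)
  have hfinS : ∀ n : ℕ, FiniteDimensional k ((𝒜 p) ^ n : Submodule k A) := fun n =>
    have := hfin (n * p)
    Submodule.finiteDimensional_of_le (hpow p n)
  obtain ⟨a, ha, ha0⟩ := (Submodule.ne_bot_iff _).mp hpne
  have hinj : Function.Injective (algebraMap A F) := IsFractionRing.injective A F
  apply le_antisymm
  · unfold homogeneousFractionField
    rw [IntermediateField.adjoin_le_iff]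
    rintro x ⟨m, b₁, hb₁, b₂, hb₂, hb0, rfl⟩
    by_contra hx
    -- replace the fraction by one with numerator and denominator in degree `m * p`
    obtain ⟨g, f, hg, hf, hf0, hxe⟩ : ∃ g f : A, g ∈ 𝒜 (m * p) ∧ f ∈ 𝒜 (m * p) ∧ f ≠ 0 ∧
        algebraMap A F b₁ / algebraMap A F b₂ = algebraMap A F g / algebraMap A F f := by
      obtain ⟨q, rfl⟩ : ∃ q, p = q + 1 := ⟨p - 1, by omega⟩
      have hq : b₂ ^ q ∈ 𝒜 (q * m) := hpow m q (Submodule.pow_mem_pow _ hb₂ q)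
      have e : q * m + m = m * (q + 1) := by ring
      refine ⟨b₂ ^ q * b₁, b₂ ^ q * b₂, ?_, ?_, mul_ne_zero (pow_ne_zero _ hb0) hb0, ?_⟩
      · rw [← e]; exact hmul _ _ (Submodule.mul_mem_mul hq hb₁)
      · rw [← e]; exact hmul _ _ (Submodule.mul_mem_mul hq hb₂)
      · rw [map_mul, map_mul, mul_div_mul_left]
        rw [map_pow]
        exact pow_ne_zero _ (by simpa using (map_ne_zero_iff _ hinj).mpr hb0)
    rw [hxe] at hx
    have hg0 : g ≠ 0 := by
      rintro rfl
      apply hx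
      simp
    have hfF : algebraMap A F f ≠ 0 := (map_ne_zero_iff _ hinj).mpr hf0
    -- dimension doubling
    have hdouble : ∀ n : ℕ, 2 * Module.finrank k ((𝒜 p) ^ n : Submodule k A) ≤
        Module.finrank k (𝒜 ((n + m) * p)) := by
      intro n
      set S : Submodule k A := (𝒜 p) ^ n with hS
      have := hfinS n
      have := hfin ((n + m) * p)
      let φ : A → A →ₗ[k] A := fun y => LinearMap.mulRight k y
      have hφ : ∀ y : A, y ≠ 0 → Function.Injective (φ y) := fun y hy =>
        mul_left_injective₀ hy
      have hle : ∀ y ∈ 𝒜 (m * p), S.map (φ y) ≤ 𝒜 ((n + m) * p) := by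
        rintro y hy _ ⟨s, hs, rfl⟩
        rw [add_mul]
        exact hmul _ _ (Submodule.mul_mem_mul (hpow p n hs) hy)
      have hinf : S.map (φ f) ⊓ S.map (φ g) = ⊥ := by
        rw [Submodule.eq_bot_iff]
        rintro z ⟨⟨s, hs, rfl⟩, ⟨t, ht, hst⟩⟩
        have hst' : t * g = s * f := hst
        change s * f = 0
        by_contra hz
        have ht0 : t ≠ 0 := by
          rintro rfl
          apply hz
          rw [← hst', zero_mul]
        apply hx
        apply IntermediateField.subset_adjoin
        refine ⟨n, s, hs, t, ht, ht0, ?_⟩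
        have htF : algebraMap A F t ≠ 0 := (map_ne_zero_iff _ hinj).mpr ht0
        rw [div_eq_div_iff hfF htF, ← map_mul, ← map_mul, ← hst', mul_comm]
      have hsum := Submodule.finrank_sup_add_finrank_inf_eq (S.map (φ f)) (S.map (φ g))
      rw [hinf, finrank_bot, ← (Submodule.equivMapOfInjective _ (hφ f hf0) S).finrank_eq,
        ← (Submodule.equivMapOfInjective _ (hφ g hg0) S).finrank_eq] at hsum
      have := Submodule.finrank_mono (sup_le (hle f hf) (hle g hg))
      omega
    have hposS : ∀ n : ℕ, 1 ≤ Module.finrank k ((𝒜 p) ^ n : Submodule k A) := by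
      intro n
      have := hfinS n
      rw [Nat.one_le_iff_ne_zero, ← Nat.pos_iff_ne_zero, Module.finrank_pos_iff,
        Submodule.nontrivial_iff_ne_bot]
      exact (Submodule.ne_bot_iff _).mpr ⟨a ^ n, Submodule.pow_mem_pow _ ha n, pow_ne_zero _ ha0⟩
    have := hfin p
    obtain ⟨N, hN⟩ := finrank_pow_le_poly (𝒜 p)
    have hev := eventually_lt_of_lt_liminf hliminf
      (isBoundedUnder_of ⟨0, fun n => by positivity⟩)
    obtain ⟨n₀, hn₀⟩ := eventually_atTop.mp hev
    refine no_exp_growth (fun n => Module.finrank k ((𝒜 p) ^ n : Submodule k A)) N hN hposS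
      m n₀ ?_
    intro n hn
    have h1 := hn₀ (n + m) (by omega)
    have h2 : (2 : ℝ) * Module.finrank k ((𝒜 p) ^ n : Submodule k A) ≤
        Module.finrank k (𝒜 ((n + m) * p)) := by exact_mod_cast hdouble n
    have h3 : (1 : ℝ) ≤ Module.finrank k ((𝒜 p) ^ n : Submodule k A) := by
      exact_mod_cast hposS n
    rw [lt_div_iff₀ (by linarith)] at h1
    linarith
  · rw [IntermediateField.adjoin_le_iff]
    rintro x ⟨n, b₁, hb₁, b₂, hb₂, hb0, rfl⟩
    exact IntermediateField.subset_adjoin _ _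
      ⟨n * p, b₁, hpow p n hb₁, b₂, hpow p n hb₂, hb0, rfl⟩
end

section
/- Let k be an infinite field, K a field extension of k, and V a nonzero finite-dimensional k-subspace of K. Let v₁, …, v_r : K∖{0} → ℤ be maps satisfying, for each i: v_i(fg) = v_i(f) + v_i(g) for all nonzero f, g; v_i(λ) = 0 for all λ ∈ k∖{0}; and v_i(f+g) ≥ min(v_i(f), v_i(g)) whenever f, g, f+g are all nonzero. Then there exists b ∈ V∖{0} such that v_i(b) = min_{f ∈ V∖{0}} v_i(f) simultaneously for every i = 1, …, r. -/
/-- Genericity of pole orders: let `k` be an infinite field, `K` a field extension of `k`,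
`V` a nonzero finite-dimensional `k`-subspace of `K`, and `v₁, …, v_r : K∖{0} → ℤ`
valuation-like maps (each satisfies `vᵢ(fg) = vᵢ(f) + vᵢ(g)`, `vᵢ = 0` on `k∖{0}`, and
`vᵢ(f+g) ≥ min(vᵢ(f), vᵢ(g))` when `f, g, f+g` are nonzero).  Then some `b ∈ V∖{0}`
simultaneously achieves `vᵢ(b) = min_{f ∈ V∖{0}} vᵢ(f)` for every `i`. -/
theorem exists_simultaneous_min_valuation
    (k K : Type*) [Field k] [Infinite k] [Field K] [Algebra k K]
    (V : Submodule k K) (hV : V ≠ ⊥) (hVfd : FiniteDimensional k V)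
    (r : ℕ) (v : Fin r → K → ℤ)
    (hv_mul : ∀ i, ∀ f g : K, f ≠ 0 → g ≠ 0 → v i (f * g) = v i f + v i g)
    (hv_const : ∀ i, ∀ lam : k, lam ≠ 0 → v i (algebraMap k K lam) = 0)
    (hv_add : ∀ i, ∀ f g : K, f ≠ 0 → g ≠ 0 → f + g ≠ 0 →
      min (v i f) (v i g) ≤ v i (f + g)) :
    ∃ b ∈ V, b ≠ 0 ∧ ∀ i : Fin r, ∀ f ∈ V, f ≠ 0 → v i b ≤ v i f := by
  classical
  have hsmul : ∀ i, ∀ (c : k) (f : K), c ≠ 0 → f ≠ 0 → v i (c • f) = v i f := by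
    intro i c f hc hf
    rw [Algebra.smul_def, hv_mul i _ _ (by simpa using hc) hf, hv_const i c hc, zero_add]
  -- the subspace of elements of valuation at least `n`
  let W : Fin r → ℤ → Submodule k V := fun i n =>
    { carrier := {f | (f : K) ≠ 0 → n ≤ v i f}
      zero_mem' := by intro h; simp at h
      add_mem' := by
        intro f g hf hg hfg
        by_cases h1 : (f : K) = 0
        · have : ((f + g : V) : K) = g := by simp [h1]
          rw [this] at hfg ⊢
          exact hg hfg
        by_cases h2 : (g : K) = 0
        · have : ((f + g : V) : K) = f := by simp [h2]
          rw [this] at hfg ⊢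
          exact hf hfg
        exact le_trans (le_min (hf h1) (hg h2)) (hv_add i f g h1 h2 hfg)
      smul_mem' := by
        intro c f hf hcf
        have hcf' : c • (f : K) ≠ 0 := hcf
        have hc : c ≠ 0 := fun h => hcf' (by simp [h])
        have h1 : (f : K) ≠ 0 := fun h => hcf' (by simp [h])
        have : v i ((c • f : V) : K) = v i f := hsmul i c f hc h1
        rw [this]
        exact hf h1 }
  have hW : ∀ i n (f : V), f ∈ W i n ↔ ((f : K) ≠ 0 → n ≤ v i f) := fun _ _ _ => Iff.rfl
  obtain ⟨x, hxV, hx0⟩ := Submodule.exists_mem_ne_zero_of_ne_bot hV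
  have hmin : ∀ i, ∃ m : ℤ, (∀ f ∈ V, f ≠ 0 → m ≤ v i f) ∧ ∃ f ∈ V, f ≠ 0 ∧ v i f = m := by
    intro i
    have hmono : Monotone (fun n : ℕ => W i (-(n : ℤ))) := by
      intro a b hab f hf h0
      have := hf h0
      omega
    obtain ⟨n, hn⟩ := monotone_stabilizes_iff_noetherian.mpr
      (inferInstance : IsNoetherian k V) ⟨_, hmono⟩
    have hb : ∀ f ∈ V, f ≠ 0 → -(n : ℤ) ≤ v i f := by
      intro f hf h0
      have h1 : (⟨f, hf⟩ : V) ∈ W i (-((n + (v i f).natAbs : ℕ) : ℤ)) := by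
        rw [hW]
        intro _
        push_cast
        show -((n : ℤ) + |v i f|) ≤ v i f
        have := neg_abs_le (v i f)
        omega
      have h2 : W i (-(n : ℤ)) = W i (-((n + (v i f).natAbs : ℕ) : ℤ)) :=
        hn (n + (v i f).natAbs) (Nat.le_add_right _ _)
      rw [← h2] at h1
      exact h1 h0
    obtain ⟨m, ⟨f, hf, h0, hm⟩, hle⟩ := Int.exists_least_of_bdd
      (P := fun z => ∃ f ∈ V, f ≠ 0 ∧ v i f = z)
      ⟨-(n : ℤ), by rintro z ⟨f, hf, h0, rfl⟩; exact hb f hf h0⟩ ⟨_, x, hxV, hx0, rfl⟩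
    exact ⟨m, fun g hg g0 => hle _ ⟨g, hg, g0, rfl⟩, f, hf, h0, hm⟩
  choose m hm hm' using hmin
  let p : Option (Fin r) → Submodule k V := fun o => o.elim ⊥ (fun i => W i (m i + 1))
  have hp : ∀ o, p o ≠ ⊤ := by
    rintro (_ | i) h
    · have : (⟨x, hxV⟩ : V) ∈ p none := h ▸ Submodule.mem_top
      have h' : (⟨x, hxV⟩ : V) = 0 := this
      exact hx0 (congrArg Subtype.val h')
    · obtain ⟨f, hf, h0, hfm⟩ := hm' i
      have : (⟨f, hf⟩ : V) ∈ p (some i) := h ▸ Submodule.mem_top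
      have h' : m i + 1 ≤ v i f := this h0
      omega
  have hne : (⋃ o, (p o : Set V)) ≠ Set.univ := fun h => by
    obtain ⟨o, ho⟩ := Subspace.exists_eq_top_of_iUnion_eq_univ h
    exact hp o ho
  obtain ⟨b, hb⟩ := (Set.ne_univ_iff_exists_notMem _).mp hne
  simp only [Set.mem_iUnion, not_exists] at hb
  refine ⟨b, b.2, ?_, ?_⟩
  · intro h
    exact hb none (show b = 0 from Subtype.ext h)
  · intro i f hf h0
    have h1 : ¬ ((b : K) ≠ 0 → m i + 1 ≤ v i b) := hb (some i)
    push Not at h1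
    have := hm i f hf h0
    omega
end

section
/- Let d ∈ ℕ, k₀ ∈ ℕ, and let u : ℕ≥1 → ℝ be a bounded sequence of nonnegative real numbers such that u_{rn+k} ≥ (rn/(rn+k))^d · u_n for all integers n ≥ 1, r ≥ 1 and k > k₀. Then the sequence (u_m) converges and lim_{m→∞} u_m = sup_{m≥1} u_m. -/
/-- Elementary convergence lemma: let `u : ℕ → ℝ` be a bounded sequence of nonnegative
reals (indexed by `n ≥ 1`) such that `u (r n + k) ≥ (rn/(rn+k))^d * u n` for all
`n ≥ 1`, `r ≥ 1` and `k > k₀`.  Then `u` converges to `sup_{m ≥ 1} u m`. -/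
theorem tendsto_sSup_of_superadditive_bound
    (d k₀ : ℕ) (u : ℕ → ℝ)
    (hnonneg : ∀ n : ℕ, 1 ≤ n → 0 ≤ u n)
    (hbdd : ∃ C : ℝ, ∀ n : ℕ, 1 ≤ n → u n ≤ C)
    (hineq : ∀ n : ℕ, 1 ≤ n → ∀ r : ℕ, 1 ≤ r → ∀ kk : ℕ, k₀ < kk →
      ((r * n : ℝ) / (r * n + kk : ℝ)) ^ d * u n ≤ u (r * n + kk)) :
    Filter.Tendsto u Filter.atTop (nhds (sSup (u '' {m : ℕ | 1 ≤ m}))) := by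
  obtain ⟨C, hC⟩ := hbdd
  have hB : BddAbove (u '' {m : ℕ | 1 ≤ m}) := by
    refine ⟨C, ?_⟩
    rintro _ ⟨m, hm, rfl⟩
    exact hC m hm
  rw [tendsto_order]
  constructor
  · intro a ha
    obtain ⟨_, ⟨n, hn, rfl⟩, han⟩ :=
      exists_lt_of_lt_csSup (⟨u 1, 1, le_refl 1, rfl⟩ : (u '' {m : ℕ | 1 ≤ m}).Nonempty) ha
    have hn : 1 ≤ n := hn
    have hlim : Filter.Tendsto (fun m : ℕ => (1 - ((k₀ + n : ℕ) : ℝ) / (m : ℝ)) ^ d * u n)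
        Filter.atTop (nhds (u n)) := by
      have h := (((tendsto_const_div_atTop_nhds_zero_nat ((k₀ + n : ℕ) : ℝ)).const_sub 1).pow
        d).mul_const (u n)
      simpa using h
    filter_upwards [hlim.eventually_const_lt han, Filter.eventually_ge_atTop (k₀ + 1 + n)]
      with m hm hmn
    refine lt_of_lt_of_le hm ?_
    have hr : 1 ≤ (m - k₀ - 1) / n := by
      rw [Nat.one_le_div_iff (by omega)]
      omega
    have hdm := Nat.div_add_mod (m - k₀ - 1) n
    have hmod := Nat.mod_lt (m - k₀ - 1) (show n > 0 by omega)
    rw [mul_comm] at hdm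
    have h := hineq n hn _ hr (k₀ + 1 + (m - k₀ - 1) % n) (by omega)
    generalize (m - k₀ - 1) / n = r at *
    generalize (m - k₀ - 1) % n = t at *
    have hme : r * n + (k₀ + 1 + t) = m := by omega
    have hmeR : (r * n + (k₀ + 1 + t : ℕ) : ℝ) = m := by exact_mod_cast hme
    rw [hmeR, hme] at h
    refine le_trans (mul_le_mul_of_nonneg_right ?_ (hnonneg n hn)) h
    have hm0 : (0 : ℝ) < m := by
      have : 0 < m := by omega
      exact_mod_cast this
    have hkm : ((k₀ + n : ℕ) : ℝ) ≤ m := by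
      have : k₀ + n ≤ m := by omega
      exact_mod_cast this
    have ht : ((k₀ + 1 + t : ℕ) : ℝ) ≤ ((k₀ + n : ℕ) : ℝ) := by
      have : k₀ + 1 + t ≤ k₀ + n := by omega
      exact_mod_cast this
    apply pow_le_pow_left₀
    · rw [sub_nonneg, div_le_one hm0]
      exact hkm
    · rw [one_sub_div hm0.ne']
      apply div_le_div_of_nonneg_right _ hm0.le
      linarith
  · intro a ha
    filter_upwards [Filter.eventually_ge_atTop 1] with m hm
    exact lt_of_le_of_lt (le_csSup hB ⟨m, hm, rfl⟩) ha
end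

section
/- Let d ≥ 0 and let Γ ⊆ ℕ × ℤ^d be an additive subsemigroup containing (0,0) such that: (1) Γ ∩ ({0} × ℤ^d) = {(0,0)}; (2) there exist finitely many vectors w₁, …, w_r ∈ ℤ^d such that Γ is contained in the subsemigroup of ℕ × ℤ^d generated by (1,w₁), …, (1,w_r); (3) Γ generates ℤ^{1+d} as a group. Let C(Γ) ⊆ ℝ^{1+d} be the closed convex cone generated by Γ and let Δ(Γ) = {x ∈ ℝ^d : (1,x) ∈ C(Γ)}. Then the limit lim_{m→∞} #{v ∈ ℤ^d : (m,v) ∈ Γ} / m^d exists and equals the d-dimensional Lebesgue measure of Δ(Γ). -/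
open Filter MeasureTheory

/-- The embedding of the lattice into the real vector space. -/
def okEmb (d : ℕ) : (ℤ × (Fin d → ℤ)) →+ (ℝ × (Fin d → ℝ)) where
  toFun z := ((z.1 : ℝ), fun i => (z.2 i : ℝ))
  map_zero' := by ext <;> simp
  map_add' := by intro x y; ext <;> simp

lemma okEmb_fst {d : ℕ} (z : ℤ × (Fin d → ℤ)) : (okEmb d z).1 = z.1 := rfl
lemma okEmb_snd {d : ℕ} (z : ℤ × (Fin d → ℤ)) (i : Fin d) : (okEmb d z).2 i = z.2 i := rfl

lemma ok_bdd {d : ℕ} (F : Finset (ℤ × (Fin d → ℤ))) :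
    {p : ℤ × (Fin d → ℤ) | ∃ t : ℤ × (Fin d → ℤ) → ℝ, (∀ g, |t g| ≤ 1) ∧
      okEmb d p = ∑ g ∈ F, t g • okEmb d g}.Finite := by
  classical
  set b : ℤ × (Fin d → ℤ) := (∑ g ∈ F, |g.1|, fun i => ∑ g ∈ F, |g.2 i|) with hb
  refine (Set.finite_Icc (-b) b).subset ?_
  rintro p ⟨t, ht, hp⟩
  have key : ∀ f : ℤ × (Fin d → ℤ) → ℤ, |∑ g ∈ F, t g * (f g : ℝ)| ≤ ((∑ g ∈ F, |f g| : ℤ) : ℝ) := by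
    intro f
    refine (Finset.abs_sum_le_sum_abs _ _).trans ?_
    push_cast
    refine Finset.sum_le_sum fun g _ => ?_
    rw [abs_mul]
    exact mul_le_of_le_one_left (abs_nonneg _) (ht g)
  have h1 : |p.1| ≤ b.1 := by
    have := congrArg Prod.fst hp
    rw [okEmb_fst, Prod.fst_sum] at this
    have k := key (fun g => g.1)
    simp only [Prod.smul_fst, okEmb_fst, smul_eq_mul] at this
    rw [← this] at k
    exact_mod_cast k
  have h2 : ∀ i, |p.2 i| ≤ b.2 i := by
    intro i
    have := congrFun (congrArg Prod.snd hp) i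
    rw [okEmb_snd, Prod.snd_sum, Finset.sum_apply] at this
    have k := key (fun g => g.2 i)
    simp only [Prod.smul_snd, Pi.smul_apply, okEmb_snd, smul_eq_mul] at this
    rw [← this] at k
    exact_mod_cast k
  exact ⟨⟨(abs_le.1 h1).1, fun i => (abs_le.1 (h2 i)).1⟩, ⟨(abs_le.1 h1).2, fun i => (abs_le.1 (h2 i)).2⟩⟩

lemma ok_A {d : ℕ} (S : AddSubmonoid (ℤ × (Fin d → ℤ))) (F : Finset (ℤ × (Fin d → ℤ)))
    (hF : ∀ g ∈ F, g ∈ S) (hspan : Submodule.span ℤ (F : Set (ℤ × (Fin d → ℤ))) = ⊤) :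
    ∃ γ : ℤ × (Fin d → ℤ), ∀ z, okEmb d z - okEmb d γ ∈
      Submodule.span NNReal (okEmb d '' (F : Set (ℤ × (Fin d → ℤ)))) → z ∈ S := by
  classical
  have hcoef : ∀ p : ℤ × (Fin d → ℤ), ∃ a : ℤ × (Fin d → ℤ) → ℤ, ∑ g ∈ F, a g • g = p := by
    intro p
    have : p ∈ Submodule.span ℤ (F : Set (ℤ × (Fin d → ℤ))) := hspan ▸ Submodule.mem_top
    obtain ⟨f, -, hf⟩ := Submodule.mem_span_finset.1 this
    exact ⟨f, hf⟩
  choose a ha using hcoef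
  obtain ⟨N, hN⟩ := (((ok_bdd F).prod F.finite_toSet).image (fun q => -a q.1 q.2)).bddAbove
  refine ⟨N • ∑ g ∈ F, g, fun z hz => ?_⟩
  obtain ⟨l, hl⟩ : ∃ l : ℤ × (Fin d → ℤ) → NNReal,
      ∑ g ∈ F, l g • okEmb d g = okEmb d z - okEmb d (N • ∑ g ∈ F, g) := by
    obtain ⟨l, hl⟩ := (Submodule.mem_span_image_finset_iff_exists_fun NNReal).1 hz
    refine ⟨fun g => if h : g ∈ F then l ⟨g, h⟩ else 0, ?_⟩
    rw [← hl, ← Finset.sum_coe_sort]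
    refine Finset.sum_congr rfl fun g _ => ?_
    simp
  set p := z - N • (∑ g ∈ F, g) - ∑ g ∈ F, ⌊(l g : ℝ)⌋ • g with hp
  have hpP : p ∈ {p : ℤ × (Fin d → ℤ) | ∃ t : ℤ × (Fin d → ℤ) → ℝ, (∀ g, |t g| ≤ 1) ∧
      okEmb d p = ∑ g ∈ F, t g • okEmb d g} := by
    refine ⟨fun g => Int.fract (l g : ℝ), fun g => ?_, ?_⟩
    · rw [abs_of_nonneg (Int.fract_nonneg _)]; exact (Int.fract_lt_one _).le
    · rw [hp, map_sub, map_sub, ← hl, map_sum, ← Finset.sum_sub_distrib]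
      refine Finset.sum_congr rfl fun g _ => ?_
      beta_reduce
      rw [map_zsmul, ← Int.self_sub_floor, sub_smul, NNReal.smul_def, Int.cast_smul_eq_zsmul]
  have hz' : z = ∑ g ∈ F, (a p g + ⌊(l g : ℝ)⌋ + N) • g := by
    simp only [add_smul, Finset.sum_add_distrib, ha p]
    rw [← Finset.smul_sum, hp]; abel
  rw [hz']
  refine S.sum_mem fun g hg => ?_
  have h0 : 0 ≤ a p g + ⌊(l g : ℝ)⌋ + N := by
    have h1 : -a p g ≤ N := hN ⟨(p, g), ⟨hpP, hg⟩, rfl⟩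
    have h2 : 0 ≤ ⌊(l g : ℝ)⌋ := Int.floor_nonneg.2 (l g).2
    omega
  obtain ⟨n, hn⟩ := Int.eq_ofNat_of_zero_le h0
  rw [hn]
  simpa using S.nsmul_mem (hF g hg) n

lemma ok_top {d : ℕ} (S : Set (ℤ × (Fin d → ℤ))) (hS : Submodule.span ℤ S = ⊤) :
    ∃ F : Finset (ℤ × (Fin d → ℤ)), (∀ g ∈ F, g ∈ S) ∧
      Submodule.span ℤ (F : Set (ℤ × (Fin d → ℤ))) = ⊤ := by
  have hfg : (⊤ : Submodule ℤ (ℤ × (Fin d → ℤ))).FG := Module.Finite.fg_top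
  rw [← hS] at hfg
  obtain ⟨F, hF, h⟩ := (Submodule.fg_span_iff_fg_span_finset_subset S).1 hfg
  exact ⟨F, fun g hg => hF hg, by rw [← h, hS]⟩

lemma ok_B {d : ℕ} (S : AddSubmonoid (ℤ × (Fin d → ℤ)))
    (hS : Submodule.span ℤ (S : Set (ℤ × (Fin d → ℤ))) = ⊤) (y : ℝ × (Fin d → ℝ))
    (hy : y ∈ interior (Submodule.span NNReal (okEmb d '' S) : Set (ℝ × (Fin d → ℝ)))) :
    ∃ γ : ℝ × (Fin d → ℝ), ∃ U ∈ nhds y, ∀ z, ∀ t : ℝ, 0 < t →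
      t • (okEmb d z - γ) ∈ U → z ∈ S := by
  classical
  obtain ⟨b, hb1, hb2⟩ := exists_mem_interior_convexHull_affineBasis (mem_interior_iff_mem_nhds.1 hy)
  obtain ⟨F0, hF0, hF0'⟩ := ok_top _ hS
  have hb3 : ∀ i, ∃ G : Finset (ℤ × (Fin d → ℤ)), (∀ g ∈ G, g ∈ S) ∧
      b i ∈ Submodule.span NNReal (okEmb d '' (G : Set (ℤ × (Fin d → ℤ)))) := by
    intro i
    have : b i ∈ Submodule.span NNReal (okEmb d '' S) :=
      hb2 (subset_convexHull ℝ _ ⟨i, rfl⟩)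
    obtain ⟨T, hT, hT'⟩ := Submodule.mem_span_finite_of_mem_span this
    obtain ⟨G, hG, hG'⟩ := Finset.subset_set_image_iff.1 hT
    refine ⟨G, fun g hg => hG hg, ?_⟩
    rw [← Finset.coe_image, hG']; exact hT'
  choose G hG hG' using hb3
  set F := F0 ∪ Finset.univ.biUnion G with hFdef
  have hF : ∀ g ∈ F, g ∈ S := by
    intro g hg
    rcases Finset.mem_union.1 hg with h | h
    · exact hF0 g h
    · obtain ⟨i, -, h⟩ := Finset.mem_biUnion.1 h
      exact hG i g h
  obtain ⟨γ, hγ⟩ := ok_A S F hF (by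
    rw [eq_top_iff, ← hF0']; exact Submodule.span_mono (by simp [hFdef]))
  refine ⟨okEmb d γ, interior (convexHull ℝ (Set.range b)), isOpen_interior.mem_nhds hb1,
    fun z t ht hz => hγ z ?_⟩
  have hsub : convexHull ℝ (Set.range b) ⊆
      (Submodule.span NNReal (okEmb d '' (F : Set (ℤ × (Fin d → ℤ)))) : Set (ℝ × (Fin d → ℝ))) := by
    refine convexHull_min ?_ ?_
    · rintro _ ⟨i, rfl⟩
      refine Submodule.span_mono (Set.image_mono ?_) (hG' i)
      intro g hg
      exact Finset.mem_union_right _ (Finset.mem_biUnion.2 ⟨i, Finset.mem_univ _, hg⟩)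
    · exact PointedCone.convex _
  have h1 := hsub (interior_subset hz)
  have h2 := Submodule.smul_mem _ (Real.toNNReal t⁻¹) h1
  rwa [NNReal.smul_def, Real.coe_toNNReal _ (by positivity), inv_smul_smul₀ ht.ne'] at h2

open Pointwise in
lemma ok_hull {E : Type*} [NormedAddCommGroup E] [NormedSpace ℝ E] (T : Set E) (h0 : T.Nonempty) :
    convexHull ℝ {y : E | ∃ c : ℝ, 0 ≤ c ∧ ∃ g ∈ T, y = c • g} =
      (Submodule.span NNReal T : Set E) := by
  set A := {y : E | ∃ c : ℝ, 0 ≤ c ∧ ∃ g ∈ T, y = c • g} with hA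
  have hsm : ∀ c : ℝ, 0 ≤ c → ∀ x ∈ convexHull ℝ A, c • x ∈ convexHull ℝ A := by
    intro c hc x hx
    have h1 : c • x ∈ convexHull ℝ (c • A) := by
      rw [convexHull_smul]; exact Set.smul_mem_smul_set hx
    refine convexHull_mono ?_ h1
    rintro _ ⟨_, ⟨e, he, g, hg, rfl⟩, rfl⟩
    exact ⟨c * e, by positivity, g, hg, by simp [mul_smul]⟩
  apply Set.Subset.antisymm
  · refine convexHull_min ?_ (PointedCone.convex _)
    rintro _ ⟨c, hc, g, hg, rfl⟩
    have := Submodule.smul_mem (Submodule.span NNReal T) (⟨c, hc⟩ : NNReal) (Submodule.subset_span hg)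
    exact this
  · intro x hx
    induction hx using Submodule.span_induction with
    | mem x h => exact subset_convexHull ℝ _ ⟨1, by simp, x, h, by simp⟩
    | zero =>
      obtain ⟨g, hg⟩ := h0
      exact subset_convexHull ℝ _ ⟨0, le_rfl, g, hg, by simp⟩
    | add x y _ _ hx hy =>
      have := convex_convexHull ℝ A (hsm 2 (by norm_num) x hx) (hsm 2 (by norm_num) y hy)
        (a := 1/2) (b := 1/2) (by norm_num) (by norm_num) (by norm_num)
      simpa [smul_smul] using this
    | smul c x _ hx => exact hsm c c.2 x hx

lemma ok_int {d : ℕ} (S : Set (ℤ × (Fin d → ℤ))) (hS : Submodule.span ℤ S = ⊤) :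
    (interior (Submodule.span NNReal (okEmb d '' S) : Set (ℝ × (Fin d → ℝ)))).Nonempty := by
  have hconv : Convex ℝ (Submodule.span NNReal (okEmb d '' S) : Set (ℝ × (Fin d → ℝ))) :=
    PointedCone.convex _
  rw [hconv.interior_nonempty_iff_affineSpan_eq_top,
    AffineSubspace.affineSpan_eq_top_iff_vectorSpan_eq_top_of_nonempty _ _ _ ⟨0, Submodule.zero_mem _⟩]
  set V := vectorSpan ℝ (Submodule.span NNReal (okEmb d '' S) : Set (ℝ × (Fin d → ℝ)))
  have h1 : ∀ z, okEmb d z ∈ V := by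
    intro z
    have hz : z ∈ Submodule.span ℤ S := hS ▸ Submodule.mem_top
    induction hz using Submodule.span_induction with
    | mem x h =>
      have := vsub_mem_vectorSpan ℝ (s := (Submodule.span NNReal (okEmb d '' S) : Set (ℝ × (Fin d → ℝ))))
        (Submodule.subset_span ⟨x, h, rfl⟩) (Submodule.zero_mem _)
      simpa using this
    | zero => simp
    | add x y _ _ hx hy => rw [map_add]; exact V.add_mem hx hy
    | smul c x _ hx => rw [map_zsmul]; exact zsmul_mem hx c
  rw [eq_top_iff]
  intro y _
  have hy : y = y.1 • okEmb d (1, 0) + ∑ i, y.2 i • okEmb d (0, Pi.single i 1) := by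
    ext j
    · simp [okEmb_fst, Prod.fst_sum]
    · simp [okEmb_snd, Prod.snd_sum, Pi.single_apply]
  rw [hy]
  exact V.add_mem (V.smul_mem _ (h1 _)) (V.sum_mem fun i _ => V.smul_mem _ (h1 _))

open Pointwise in
lemma ok_slice {d : ℕ} (P : Submodule NNReal (ℝ × (Fin d → ℝ)))
    (hP : (interior (P : Set (ℝ × (Fin d → ℝ)))).Nonempty) (x : Fin d → ℝ)
    (hx : ((1 : ℝ), x) ∈ closure (P : Set (ℝ × (Fin d → ℝ)))) :
    x ∈ closure {x : Fin d → ℝ | ((1 : ℝ), x) ∈ interior (P : Set (ℝ × (Fin d → ℝ)))} := by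
  have hconv : Convex ℝ (P : Set (ℝ × (Fin d → ℝ))) := PointedCone.convex P
  rw [← hconv.closure_interior_eq_closure_of_nonempty_interior hP] at hx
  have hcont : ContinuousAt (fun y : ℝ × (Fin d → ℝ) => y.1⁻¹ • y.2) ((1 : ℝ), x) := by
    refine ContinuousAt.smul (ContinuousAt.inv₀ continuousAt_fst (by simp)) continuousAt_snd
  have hpos : ∀ᶠ y : ℝ × (Fin d → ℝ) in nhds ((1 : ℝ), x), 0 < y.1 :=
    (continuous_fst.isOpen_preimage _ isOpen_Ioi).mem_nhds (by simp)
  have hfr := (mem_closure_iff_frequently.1 hx).and_eventually hpos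
  have ht : Tendsto (fun y : ℝ × (Fin d → ℝ) => y.1⁻¹ • y.2) (nhds ((1 : ℝ), x)) (nhds x) := by
    have := hcont.tendsto
    simpa using this
  refine mem_closure_iff_frequently.2 (ht.frequently (hfr.mono ?_))
  rintro ⟨t, y⟩ ⟨hy, ht⟩
  simp only at ht hy ⊢
  have h1 : interior (P : Set (ℝ × (Fin d → ℝ))) = t⁻¹ • interior (P : Set (ℝ × (Fin d → ℝ))) := by
    rw [← interior_smul₀ (by positivity)]
    congr 1
    ext z
    rw [Set.mem_smul_set_iff_inv_smul_mem₀ (by positivity), inv_inv]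
    constructor
    · intro h
      exact P.smul_mem (⟨t, ht.le⟩ : NNReal) h
    · intro h
      have := P.smul_mem (⟨t⁻¹, by positivity⟩ : NNReal) h
      change t⁻¹ • t • z ∈ P at this
      rwa [inv_smul_smul₀ ht.ne'] at this
  change ((1 : ℝ), t⁻¹ • y) ∈ interior (P : Set (ℝ × (Fin d → ℝ)))
  rw [h1]
  refine ⟨(t, y), hy, ?_⟩
  simp [ht.ne']

lemma ok_bound {d : ℕ} (S : Set (ℤ × (Fin d → ℤ))) (W : ℝ)
    (hW : ∀ g ∈ S, ∀ i, |(g.2 i : ℝ)| ≤ W * g.1) (y : ℝ × (Fin d → ℝ))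
    (hy : y ∈ closure (Submodule.span NNReal (okEmb d '' S) : Set (ℝ × (Fin d → ℝ)))) :
    ∀ i, |y.2 i| ≤ W * y.1 := by
  have hcl : IsClosed {y : ℝ × (Fin d → ℝ) | ∀ i, |y.2 i| ≤ W * y.1} := by
    simp only [Set.ofPred_forall]
    refine isClosed_iInter fun i => isClosed_le (by fun_prop) (by fun_prop)
  refine closure_minimal (s := (Submodule.span NNReal (okEmb d '' S) : Set (ℝ × (Fin d → ℝ))))
    (t := {y : ℝ × (Fin d → ℝ) | ∀ i, |y.2 i| ≤ W * y.1}) ?_ hcl hy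
  intro x hx
  induction hx using Submodule.span_induction with
  | mem x h =>
    obtain ⟨g, hg, rfl⟩ := h
    exact hW g hg
  | zero => simp
  | add x y _ _ hx hy =>
    intro i
    have := hx i
    have := hy i
    have := abs_add_le (x.2 i) (y.2 i)
    simp only [Prod.snd_add, Prod.fst_add, Pi.add_apply]
    linarith
  | smul c x _ hx =>
    intro i
    have := hx i
    rw [NNReal.smul_def]
    simp only [Prod.smul_snd, Prod.smul_fst, Pi.smul_apply, smul_eq_mul, abs_mul]
    have := mul_le_mul_of_nonneg_left this c.2
    simp only [NNReal.val_eq_coe, NNReal.abs_eq] at *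
    linarith

/-- Volume part: shrink an open bounded convex set. -/
lemma ok_shrink {d : ℕ} (D : Set (Fin d → ℝ)) (hD : IsOpen D) (hc : Convex ℝ D)
    (hb : Bornology.IsBounded D) (a : ℝ) (ha : a < volume.real D) :
    ∃ K ⊆ D, IsCompact K ∧ Convex ℝ K ∧ a < volume.real K := by
  rcases D.eq_empty_or_nonempty with rfl | ⟨x, hx⟩
  · exact ⟨∅, by simp, by simp, convex_empty, ha⟩
  have ht : Tendsto (fun r : ℝ => |r ^ d| * volume.real D) (nhdsWithin 1 (Set.Iio 1))
      (nhds (|(1 : ℝ) ^ d| * volume.real D)) := by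
    refine Tendsto.mono_left ?_ nhdsWithin_le_nhds
    exact (Continuous.tendsto (by fun_prop) 1)
  have h1 : ∀ᶠ r in nhdsWithin (1 : ℝ) (Set.Iio 1), a < |r ^ d| * volume.real D :=
    ht.eventually (lt_mem_nhds (by simpa using ha))
  have h2 : ∀ᶠ r in nhdsWithin (1 : ℝ) (Set.Iio 1), 0 < r :=
    nhdsWithin_le_nhds (lt_mem_nhds one_pos)
  obtain ⟨r, ⟨har, hr0⟩, hr1⟩ := ((h1.and h2).and self_mem_nhdsWithin).exists
  have hr1 : r < 1 := hr1
  set D' := AffineMap.homothety x r '' D with hD'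
  have hc' : Convex ℝ D' := hc.affine_image _
  have hx' : x ∈ interior D' := by
    have : IsOpen D' := AffineMap.homothety_isOpenMap x r hr0.ne' _ hD
    rw [this.interior_eq]
    exact ⟨x, hx, by simp⟩
  have hsub := hc'.closure_subset_interior_image_homothety_of_one_lt hx' r⁻¹ ((one_lt_inv₀ hr0).2 hr1)
  have hDD : AffineMap.homothety x r⁻¹ '' D' = D := by
    rw [hD', Set.image_image]
    simp [AffineMap.homothety_apply, hr0.ne']
  rw [hDD, hD.interior_eq] at hsub
  refine ⟨closure D', hsub, ?_, hc'.closure, ?_⟩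
  · exact Metric.isCompact_of_isClosed_isBounded isClosed_closure (hb.subset hsub)
  · refine har.trans_le ?_
    have hvol : volume.real D' = |r ^ d| * volume.real D := by
      rw [Measure.real, Measure.addHaar_image_homothety, ENNReal.toReal_mul,
        ENNReal.toReal_ofReal (abs_nonneg _)]
      simp [Measure.real]
    rw [← hvol]
    exact measureReal_mono subset_closure ((hb.subset hsub).measure_lt_top.ne)

open Pointwise in
lemma ok_lattice {d : ℕ} (c : ℝ) (x : Fin d → ℝ) :
    x ∈ c • (Submodule.span ℤ (Set.range (Pi.basisFun ℝ (Fin d))) : Set (Fin d → ℝ)) ↔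
      ∃ v : Fin d → ℤ, x = c • (fun i => (v i : ℝ)) := by
  have hL : ∀ y : Fin d → ℝ, y ∈ Submodule.span ℤ (Set.range (Pi.basisFun ℝ (Fin d))) ↔
      ∃ v : Fin d → ℤ, (fun i => (v i : ℝ)) = y := by
    intro y
    rw [Module.Basis.mem_span_iff_repr_mem]
    simp only [Pi.basisFun_repr, Set.mem_range, algebraMap_int_eq, eq_intCast]
    constructor
    · intro h
      choose v hv using h
      exact ⟨v, funext hv⟩
    · rintro ⟨v, rfl⟩ i
      exact ⟨v i, rfl⟩
  rw [Set.mem_smul_set]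
  constructor
  · rintro ⟨y, hy, rfl⟩
    obtain ⟨v, rfl⟩ := (hL y).1 hy
    exact ⟨v, rfl⟩
  · rintro ⟨v, rfl⟩
    exact ⟨_, (hL _).2 ⟨v, rfl⟩, rfl⟩

lemma ok_lower {d : ℕ} (S : AddSubmonoid (ℤ × (Fin d → ℤ)))
    (hS : Submodule.span ℤ (S : Set (ℤ × (Fin d → ℤ))) = ⊤) (K : Set (Fin d → ℝ))
    (hK : IsCompact K)
    (hKD : ∀ x ∈ K, ((1 : ℝ), x) ∈
      interior (Submodule.span NNReal (okEmb d '' S) : Set (ℝ × (Fin d → ℝ)))) :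
    ∀ᶠ m : ℕ in atTop, ∀ v : Fin d → ℤ, ((m : ℝ)⁻¹ • (fun i => (v i : ℝ)) : Fin d → ℝ) ∈ K →
      ((m : ℤ), v) ∈ S := by
  refine hK.induction_on (p := fun K => ∀ᶠ m : ℕ in atTop, ∀ v : Fin d → ℤ,
    ((m : ℝ)⁻¹ • (fun i => (v i : ℝ)) : Fin d → ℝ) ∈ K → ((m : ℤ), v) ∈ S) ?_ ?_ ?_ ?_
  · simp
  · intro s t hst ht
    filter_upwards [ht] with m hm v hv using hm v (hst hv)
  · intro s t hs ht
    filter_upwards [hs, ht] with m h1 h2 v hv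
    exact hv.elim (h1 v) (h2 v)
  · intro x hx
    obtain ⟨γ, U, hU, h⟩ := ok_B S hS _ (hKD x hx)
    have hf : ContinuousAt (fun q : (Fin d → ℝ) × ℝ => ((1 : ℝ), q.1) - q.2 • γ) (x, 0) :=
      Continuous.continuousAt (by fun_prop)
    have hev : ∀ᶠ q in nhds x ×ˢ nhds (0 : ℝ), ((1 : ℝ), q.1) - q.2 • γ ∈ U := by
      rw [← nhds_prod_eq]
      refine hf.eventually_mem ?_
      simpa using hU
    obtain ⟨pa, hpa, pb, hpb, hab⟩ := Filter.eventually_prod_iff.1 hev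
    refine ⟨{y | pa y}, nhdsWithin_le_nhds hpa, ?_⟩
    have hm0 : Tendsto (fun m : ℕ => (m : ℝ)⁻¹) atTop (nhds 0) := tendsto_inv_atTop_nhds_zero_nat
    filter_upwards [hm0.eventually hpb, eventually_gt_atTop 0] with m hm hmpos v hv
    have hmpos' : (0 : ℝ) < m := by exact_mod_cast hmpos
    refine h _ (m : ℝ)⁻¹ (by positivity) ?_
    have := hab hv hm
    convert this using 1
    rw [smul_sub]
    congr 1
    ext i
    · simp [okEmb_fst, hmpos'.ne']
    · simp [okEmb_snd]

set_option maxHeartbeats 1000000 in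
theorem semigroup_okounkov_volume
    (d : ℕ) (Γ : Set (ℕ × (Fin d → ℤ)))
    (hzero : (0, 0) ∈ Γ)
    (hadd : ∀ x ∈ Γ, ∀ y ∈ Γ, x + y ∈ Γ)
    (h1 : ∀ v : Fin d → ℤ, (0, v) ∈ Γ → v = 0)
    (h2 : ∃ (r : ℕ) (w : Fin r → (Fin d → ℤ)),
      Γ ⊆ (AddSubmonoid.closure (Set.range fun i => ((1 : ℕ), w i)) : Set (ℕ × (Fin d → ℤ))))
    (h3 : AddSubgroup.closure
      ((fun g : ℕ × (Fin d → ℤ) => ((g.1 : ℤ), g.2)) '' Γ) = (⊤ : AddSubgroup (ℤ × (Fin d → ℤ)))) :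
    Tendsto
      (fun m : ℕ => ({v : Fin d → ℤ | (m, v) ∈ Γ}.ncard : ℝ) / (m : ℝ) ^ d)
      atTop
      (nhds ((volume {x : Fin d → ℝ |
        ((1 : ℝ), x) ∈ closure (convexHull ℝ
          {y : ℝ × (Fin d → ℝ) | ∃ c : ℝ, 0 ≤ c ∧ ∃ g ∈ Γ,
            y = c • ((g.1 : ℝ), fun i => (g.2 i : ℝ))})}).toReal)) := by
  classical
  -- the semigroup inside the lattice
  let S : AddSubmonoid (ℤ × (Fin d → ℤ)) :=
    { carrier := (fun g : ℕ × (Fin d → ℤ) => ((g.1 : ℤ), g.2)) '' Γ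
      zero_mem' := ⟨_, hzero, by simp⟩
      add_mem' := by
        rintro _ _ ⟨x, hx, rfl⟩ ⟨y, hy, rfl⟩
        exact ⟨x + y, hadd x hx y hy, by simp⟩ }
  have hSΓ : ∀ (m : ℕ) (v : Fin d → ℤ), ((m : ℤ), v) ∈ S ↔ (m, v) ∈ Γ := by
    intro m v
    constructor
    · rintro ⟨⟨n, u⟩, hg, he⟩
      simp only [Prod.mk.injEq, Nat.cast_inj] at he
      obtain ⟨rfl, rfl⟩ := he
      exact hg
    · intro h
      exact ⟨_, h, rfl⟩
  have hS : Submodule.span ℤ (S : Set (ℤ × (Fin d → ℤ))) = ⊤ := by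
    rw [eq_top_iff]
    intro z _
    have hz : z ∈ AddSubgroup.closure
      ((fun g : ℕ × (Fin d → ℤ) => ((g.1 : ℤ), g.2)) '' Γ) := h3 ▸ AddSubgroup.mem_top z
    have hle : AddSubgroup.closure ((fun g : ℕ × (Fin d → ℤ) => ((g.1 : ℤ), g.2)) '' Γ) ≤
        (Submodule.span ℤ (S : Set (ℤ × (Fin d → ℤ)))).toAddSubgroup :=
      (AddSubgroup.closure_le _).2 (by
        rintro _ ⟨g, hg, rfl⟩
        rw [SetLike.mem_coe, Submodule.mem_toAddSubgroup]
        exact Submodule.subset_span ((hSΓ g.1 g.2).2 hg))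
    exact (Submodule.mem_toAddSubgroup _).1 (hle hz)
  -- linear growth
  obtain ⟨W, hW0, hW⟩ : ∃ W : ℝ, 0 ≤ W ∧ ∀ g ∈ (S : Set (ℤ × (Fin d → ℤ))), ∀ i,
      |(g.2 i : ℝ)| ≤ W * g.1 := by
    obtain ⟨r, w, hw⟩ := h2
    refine ⟨∑ j, ∑ i, |(w j i : ℝ)|, by positivity, ?_⟩
    rintro _ ⟨g, hg, rfl⟩
    have hg' := hw hg
    simp only
    clear hg
    induction hg' using AddSubmonoid.closure_induction with
    | mem x h =>
      obtain ⟨j, rfl⟩ := h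
      intro i
      simp only [Nat.cast_one, Int.cast_one, mul_one]
      calc |(w j i : ℝ)| ≤ ∑ i, |(w j i : ℝ)| :=
            Finset.single_le_sum (f := fun i => |(w j i : ℝ)|) (fun _ _ => abs_nonneg _)
              (Finset.mem_univ i)
        _ ≤ _ := Finset.single_le_sum (f := fun j => ∑ i, |(w j i : ℝ)|)
              (fun _ _ => by positivity) (Finset.mem_univ j)
    | zero => simp
    | add x y _ _ hx hy =>
      intro i
      have e1 := hx i
      have e2 := hy i
      have e3 := abs_add_le (x.2 i : ℝ) (y.2 i)
      simp only [Prod.snd_add, Prod.fst_add, Pi.add_apply]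
      push_cast at *
      linarith
  have hemb : ∀ g : ℕ × (Fin d → ℤ), okEmb d ((g.1 : ℤ), g.2) =
      ((g.1 : ℝ), fun i => (g.2 i : ℝ)) := by
    intro g
    ext i
    · simp [okEmb_fst]
    · simp [okEmb_snd]
  set P := Submodule.span NNReal (okEmb d '' S) with hP
  have hset : convexHull ℝ {y : ℝ × (Fin d → ℝ) | ∃ c : ℝ, 0 ≤ c ∧ ∃ g ∈ Γ,
      y = c • ((g.1 : ℝ), fun i => (g.2 i : ℝ))} = (P : Set (ℝ × (Fin d → ℝ))) := by
    have hne : (okEmb d '' (S : Set (ℤ × (Fin d → ℤ)))).Nonempty := Set.Nonempty.image _ ⟨0, S.zero_mem⟩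
    rw [hP, ← ok_hull _ hne]
    congr 1
    ext y
    constructor
    · rintro ⟨c, hc, g, hg, rfl⟩
      exact ⟨c, hc, okEmb d ((g.1 : ℤ), g.2), Set.mem_image_of_mem _ ((hSΓ g.1 g.2).2 hg), by rw [hemb]⟩
    · rintro ⟨c, hc, _, ⟨_, ⟨g, hg, rfl⟩, rfl⟩, rfl⟩
      exact ⟨c, hc, g, hg, by rw [hemb]⟩
  rw [hset]
  have hPc : Convex ℝ (P : Set (ℝ × (Fin d → ℝ))) := PointedCone.convex P
  have hPi : (interior (P : Set (ℝ × (Fin d → ℝ)))).Nonempty := ok_int _ hS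
  have hslice : ∀ Q : Set (ℝ × (Fin d → ℝ)), Convex ℝ Q →
      Convex ℝ {x : Fin d → ℝ | ((1 : ℝ), x) ∈ Q} := by
    intro Q hQ x hx y hy a b ha hb hab
    have := hQ hx hy ha hb hab
    simpa [hab] using this
  set Δ := {x : Fin d → ℝ | ((1 : ℝ), x) ∈ closure (P : Set (ℝ × (Fin d → ℝ)))} with hΔ
  set D := {x : Fin d → ℝ | ((1 : ℝ), x) ∈ interior (P : Set (ℝ × (Fin d → ℝ)))} with hD
  have hΔc : Convex ℝ Δ := hslice _ hPc.closure
  have hDc : Convex ℝ D := hslice _ hPc.interior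
  have hΔcl : IsClosed Δ := isClosed_closure.preimage (by fun_prop)
  have hDo : IsOpen D := isOpen_interior.preimage (by fun_prop)
  have hDΔ : D ⊆ Δ := fun x hx => subset_closure (interior_subset hx)
  have hΔD : Δ ⊆ closure D := fun x hx => ok_slice P hPi x hx
  have hΔb : Bornology.IsBounded Δ := by
    refine (Metric.isBounded_closedBall (x := (0 : Fin d → ℝ)) (r := W)).subset ?_
    intro x hx
    rw [mem_closedBall_zero_iff, pi_norm_le_iff_of_nonneg hW0]
    intro i
    have := ok_bound _ W hW _ hx i
    simpa using this
  have hvol : volume.real Δ = volume.real D := by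
    have e : volume (closure D) = volume D :=
      measure_closure_of_null_frontier (hDc.addHaar_frontier volume)
    refine congrArg ENNReal.toReal (le_antisymm ((measure_mono hΔD).trans e.le) (measure_mono hDΔ))
  change Tendsto _ _ (nhds (volume.real Δ))
  -- lattice points
  let φ : ℕ → (Fin d → ℤ) → (Fin d → ℝ) := fun m v => (m : ℝ)⁻¹ • (fun i => (v i : ℝ))
  have hφ : ∀ m : ℕ, 0 < m → Function.Injective (φ m) := by
    intro m hm u v huv
    have hm' : (m : ℝ) ≠ 0 := by positivity
    funext i
    have := congrFun huv i
    simpa [φ, hm'] using this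
  have hcard : ∀ m : ℕ, 0 < m → {v : Fin d → ℤ | (m, v) ∈ Γ}.ncard =
      (φ m '' {v : Fin d → ℤ | (m, v) ∈ Γ}).ncard := fun m hm =>
    (Set.ncard_image_of_injective _ (hφ m hm)).symm
  open Pointwise in
  have hup : ∀ m : ℕ, 0 < m → φ m '' {v : Fin d → ℤ | (m, v) ∈ Γ} ⊆
      Δ ∩ (m : ℝ)⁻¹ • (Submodule.span ℤ (Set.range (Pi.basisFun ℝ (Fin d))) : Set (Fin d → ℝ)) := by
    rintro m hm _ ⟨v, hv, rfl⟩
    have hm' : (0 : ℝ) < m := by positivity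
    refine ⟨?_, (ok_lattice _ _).2 ⟨v, rfl⟩⟩
    refine subset_closure ?_
    have := P.smul_mem (Real.toNNReal (m : ℝ)⁻¹)
      (Submodule.subset_span (Set.mem_image_of_mem _ ((hSΓ m v).2 hv)) : okEmb d ((m : ℤ), v) ∈ P)
    have he : (m : ℝ)⁻¹ • okEmb d ((m : ℤ), v) = ((1 : ℝ), φ m v) := by
      ext i
      · simp [okEmb_fst, hm'.ne']
      · simp [okEmb_snd, φ]
    rw [NNReal.smul_def, Real.coe_toNNReal _ (by positivity), he] at this
    exact this
  open Pointwise in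
  have hfin : ∀ m : ℕ, 0 < m → (Δ ∩ (m : ℝ)⁻¹ •
      (Submodule.span ℤ (Set.range (Pi.basisFun ℝ (Fin d))) : Set (Fin d → ℝ))).Finite := by
    intro m hm
    have hm' : (m : ℝ) ≠ 0 := by positivity
    have hf := (ZSpan.setFinite_inter (Pi.basisFun ℝ (Fin d)) (hΔb.smul₀ (m : ℝ)))
    refine (hf.image (fun x => (m : ℝ)⁻¹ • x)).subset ?_
    rintro _ ⟨hx, y, hy, rfl⟩
    refine ⟨y, ⟨⟨_, hx, ?_⟩, hy⟩, rfl⟩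
    simp [hm']
  have hlim := fun (s : Set (Fin d → ℝ)) hb hm hc =>
    tendsto_card_div_pow_atTop_volume (ι := Fin d) s hb hm (Convex.addHaar_frontier volume hc)
  simp only [Fintype.card_fin] at hlim
  refine tendsto_order.2 ⟨fun a ha => ?_, fun a ha => ?_⟩
  · rw [hvol] at ha
    obtain ⟨K, hKD, hK, hKc, haK⟩ := ok_shrink D hDo hDc (hΔb.subset hDΔ) a ha
    have hl := hlim K hK.isBounded hK.measurableSet hKc
    filter_upwards [hl.eventually (lt_mem_nhds haK), ok_lower S hS K hK (fun x hx => hKD hx),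
      eventually_gt_atTop 0] with m hm1 hm2 hm3
    refine hm1.trans_le ?_
    gcongr
    rw [hcard m hm3, Nat.card_coe_set_eq]
    refine Set.ncard_le_ncard ?_ ((hfin m hm3).subset (hup m hm3))
    rintro x ⟨hx, hxL⟩
    obtain ⟨v, rfl⟩ := (ok_lattice _ _).1 hxL
    exact ⟨v, (hSΓ m v).1 (hm2 v hx), rfl⟩
  · have hl := hlim Δ hΔb hΔcl.measurableSet hΔc
    filter_upwards [hl.eventually (gt_mem_nhds ha), eventually_gt_atTop 0] with m hm1 hm3
    refine lt_of_le_of_lt ?_ hm1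
    gcongr
    rw [hcard m hm3, Nat.card_coe_set_eq]
    exact Set.ncard_le_ncard (hup m hm3) (hfin m hm3)
end

section
/- Let d ≥ 2 be an integer and define vectors e₁, …, e_{d+1} ∈ ℤ^d by: e₁ = (0, …, 0), e₂ = (1, 0, …, 0), and for 3 ≤ i ≤ d+1, e_i = (1, 0, …, 0, 1, 0, …, 0) with the second 1 in coordinate i−1. Let δ > 0 be a real number, let m and p be positive integers, and let v = (v₁, 0, …, 0) ∈ ℤ^d with v₁ ≤ −δm. Then the map (a₀, a₁, …, a_{d+1}) ↦ a₀·v + Σ_{i=1}^{d+1} a_i·e_i is injective on the set {(a₀, …, a_{d+1}) ∈ ℕ^{d+2} : a₀·m + Σ_{i=1}^{d+1} a_i = p·m and a₂ < δm}. -/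
/-- Combinatorial injectivity lemma for the finiteness of the truncated divisors.
Let `d ≥ 2`, let `e₁, …, e_{d+1} ∈ ℤ^d` be the vectors `e₁ = 0`, `e₂ = (1,0,…,0)` and,
for `3 ≤ i ≤ d+1`, `e_i = (1,0,…,0,1,0,…,0)` with the second `1` in coordinate `i−1`
(here `e (t : Fin (d+1))` is the vector `e_{t+1}`, so `e t` has a `1` in coordinate `1`
(1-indexed) and, when `t ≥ 2`, a `1` in coordinate `t − 1 + 1` (1-indexed), i.e. the
0-indexed coordinates `0` and `t − 1`).  Let `δ > 0`, let `m, p` be positive integers and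
`v = (v₁, 0, …, 0) ∈ ℤ^d` with `v₁ ≤ −δm`.  Then
`(a₀, a₁, …, a_{d+1}) ↦ a₀·v + Σᵢ aᵢ·eᵢ` is injective on the set of tuples in `ℕ^{d+2}`
with `a₀·m + Σ_{i=1}^{d+1} aᵢ = p·m` and `a₂ < δm`. -/
theorem injOn_truncation_lemma
    (d : ℕ) (hd : 2 ≤ d)
    (e : Fin (d + 1) → (Fin d → ℤ))
    (he0 : e 0 = 0)
    (het : ∀ t : Fin (d + 1), 1 ≤ (t : ℕ) →
      e t = fun j : Fin d => if (j : ℕ) = 0 ∨ (j : ℕ) = (t : ℕ) - 1 then 1 else 0)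
    (δ : ℝ) (hδ : 0 < δ) (m p : ℕ) (hm : 0 < m) (hp : 0 < p)
    (v : Fin d → ℤ)
    (hv1 : (v ⟨0, by omega⟩ : ℝ) ≤ -(δ * m))
    (hv0 : ∀ j : Fin d, (j : ℕ) ≠ 0 → v j = 0) :
    Set.InjOn
      (fun a : Fin (d + 2) → ℕ =>
        (a 0 : ℤ) • v + ∑ i : Fin (d + 1), (a i.succ : ℤ) • e i)
      {a : Fin (d + 2) → ℕ |
        a 0 * m + ∑ i : Fin (d + 1), a i.succ = p * m ∧ ((a 2 : ℝ) < δ * m)} := by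
  obtain ⟨n, rfl⟩ : ∃ n, d = n + 1 := ⟨d - 1, by omega⟩
  have key0 : ∀ a : Fin (n + 1 + 2) → ℕ,
      ((a 0 : ℤ) • v + ∑ i : Fin (n + 1 + 1), (a i.succ : ℤ) • e i) 0
        = a 0 * v 0 + (a 2 + ∑ i : Fin n, (a i.succ.succ.succ : ℤ)) := by
    intro a
    rw [Fin.sum_univ_succ, Fin.sum_univ_succ, he0, het (Fin.succ 0) (by simp)]
    have h : ∀ i : Fin n, e i.succ.succ 0 = 1 := by
      intro i
      rw [het _ (by simp)]
      simp
    simp [Finset.sum_apply, h]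
  have keyj : ∀ (a : Fin (n + 1 + 2) → ℕ) (j : Fin n),
      ((a 0 : ℤ) • v + ∑ i : Fin (n + 1 + 1), (a i.succ : ℤ) • e i) j.succ
        = a j.succ.succ.succ := by
    intro a j
    rw [Fin.sum_univ_succ, Fin.sum_univ_succ, he0, het (Fin.succ 0) (by simp)]
    have h : ∀ i : Fin n, e i.succ.succ j.succ = if j = i then 1 else 0 := by
      intro i
      rw [het _ (by simp)]
      simp [Fin.ext_iff]
    simp [Finset.sum_apply, h, hv0 j.succ (by simp)]
  rintro a ⟨ha, ha2⟩ b ⟨hb, hb2⟩ hab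
  have hj : ∀ j : Fin n, a j.succ.succ.succ = b j.succ.succ.succ := by
    intro j
    have h := congrFun hab j.succ
    simp only [keyj] at h
    exact_mod_cast h
  have h0 := congrFun hab 0
  simp only [key0, hj] at h0
  have hv : (v 0 : ℝ) ≤ -(δ * m) := hv1
  have hva : (a 2 : ℤ) < - v 0 := by
    have : ((a 2 : ℤ) : ℝ) < ((- v 0 : ℤ) : ℝ) := by push_cast; linarith
    exact_mod_cast this
  have hvb : (b 2 : ℤ) < - v 0 := by
    have : ((b 2 : ℤ) : ℝ) < ((- v 0 : ℤ) : ℝ) := by push_cast; linarith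
    exact_mod_cast this
  have e0 : a 0 = b 0 := by
    rcases lt_trichotomy (a 0) (b 0) with h | h | h
    · have : (a 0 : ℤ) + 1 ≤ b 0 := by exact_mod_cast h
      nlinarith
    · exact h
    · have : (b 0 : ℤ) + 1 ≤ a 0 := by exact_mod_cast h
      nlinarith
  have e2 : a 2 = b 2 := by
    rw [e0] at h0
    have : (a 2 : ℤ) = b 2 := by linarith
    exact_mod_cast this
  have e1 : a 1 = b 1 := by
    rw [Fin.sum_univ_succ, Fin.sum_univ_succ] at ha hb
    simp only [hj, e0] at ha
    have e2' : a (Fin.succ (Fin.succ 0)) = b (Fin.succ (Fin.succ 0)) := e2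
    have : a (Fin.succ 0) = b (Fin.succ 0) := by omega
    exact this
  funext i
  refine Fin.cases e0 (fun i => ?_) i
  refine Fin.cases e1 (fun i => ?_) i
  exact Fin.cases e2 (fun i => hj i) i
end

section
/- Let d ≥ 1 be an integer, δ > 0 a real number, and m a positive integer with δm ≥ 1. For each positive integer p define Z(p) = {(a₀, a₁, …, a_{d+1}) ∈ ℕ^{d+2} : a₀·m + Σ_{i=1}^{d+1} a_i = p·m, p/(δ+1) ≤ a₀ ≤ p, and a₂ < δm}. Then liminf_{p→∞} #Z(p) / (p·m)^d ≥ δ^{d+1} / (d!·(1+δ)^d). -/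
open Filter

namespace ZCount

/-- The set `Z(p)` with `d = e + 1`. -/
def Z (e m : ℕ) (δ : ℝ) (p : ℕ) : Set (Fin (e + 1 + 2) → ℕ) :=
  {a : Fin (e + 1 + 2) → ℕ |
            a 0 * m + ∑ i : Fin (e + 1 + 1), a i.succ = p * m ∧
            (p : ℝ) / (δ + 1) ≤ (a 0 : ℝ) ∧ a 0 ≤ p ∧
            ((a 2 : ℕ) : ℝ) < δ * m}

lemma pow_step (J e : ℕ) : (J + 1) ^ (e + 1) ≤ J ^ (e + 1) + (e + 1) * (J + 1) ^ e := by
  induction e with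
  | zero => simp
  | succ e ih =>
    have h1 : J ^ (e + 1) ≤ (J + 1) ^ (e + 1) := Nat.pow_le_pow_left (Nat.le_succ J) _
    have h2 := Nat.mul_le_mul_right (J + 1) ih
    calc (J + 1) ^ (e + 1 + 1) = (J + 1) ^ (e + 1) * (J + 1) := pow_succ _ _
      _ ≤ _ := h2
      _ = J ^ (e + 1 + 1) + J ^ (e + 1) + (e + 1) * (J + 1) ^ (e + 1) := by ring
      _ ≤ J ^ (e + 1 + 1) + (J + 1) ^ (e + 1) + (e + 1) * (J + 1) ^ (e + 1) := by gcongr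
      _ = _ := by ring

lemma sum_pow_ge (J e : ℕ) : J ^ (e + 1) ≤ (e + 1) * ∑ j ∈ Finset.range (J + 1), j ^ e := by
  induction J with
  | zero => simp
  | succ J ih =>
    rw [Finset.sum_range_succ, mul_add]
    exact (pow_step J e).trans (by gcongr)

lemma card_anti (n e : ℕ) :
    n ^ e ≤ e.factorial * ((Finset.univ : Finset (Fin (e + 1))).finsuppAntidiag n).card := by
  rw [Finset.card_finsuppAntidiag_nat_eq_choose]
  have h : (Finset.univ : Finset (Fin (e + 1))).card + n - 1 = n + e := by simp; omega
  rw [h, Nat.choose_symm_add, ← Nat.ascFactorial_eq_factorial_mul_choose]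
  exact (Nat.pow_le_pow_left (Nat.le_succ n) e).trans (Nat.pow_succ_le_ascFactorial _ _)

/-- The finite set used for the upper bound. -/
def U (e m N p : ℕ) : Finset (ℕ × ℕ × (Fin e → ℕ)) :=
  Finset.range (p + 1) ×ˢ Finset.range N ×ˢ Fintype.piFinset (fun _ => Finset.range (p * m + 1))

/-- Forget the coordinate `a 1`. -/
def fU (e : ℕ) (a : Fin (e + 1 + 2) → ℕ) : ℕ × ℕ × (Fin e → ℕ) :=
  (a 0, a 2, fun i => a i.succ.succ.succ)

lemma sum_split (e : ℕ) (a : Fin (e + 1 + 2) → ℕ) :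
    ∑ i : Fin (e + 1 + 1), a i.succ = a 1 + (a 2 + ∑ i : Fin e, a i.succ.succ.succ) := by
  rw [Fin.sum_univ_succ, Fin.sum_univ_succ]; rfl

lemma fU_maps (e m : ℕ) (δ : ℝ) (p : ℕ) :
    ∀ a ∈ Z e m δ p, fU e a ∈ (U e m ⌈δ * m⌉₊ p : Set _) := by
  rintro a ⟨h1, h2, h3, h4⟩
  rw [sum_split] at h1
  simp only [U, fU, Finset.coe_product, Set.mem_prod, Finset.mem_coe, Finset.mem_range,
    Fintype.mem_piFinset]
  refine ⟨by omega, Nat.lt_ceil.2 h4, fun i => ?_⟩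
  have := Finset.single_le_sum (f := fun i : Fin e => a i.succ.succ.succ)
    (fun _ _ => Nat.zero_le _) (Finset.mem_univ i)
  omega

lemma fU_inj (e m : ℕ) (δ : ℝ) (p : ℕ) : Set.InjOn (fU e) (Z e m δ p) := by
  rintro a ⟨h1, -⟩ b ⟨h2, -⟩ hab
  rw [sum_split] at h1 h2
  simp only [fU, Prod.mk.injEq] at hab
  obtain ⟨h0, h3, h4⟩ := hab
  have h5 : ∑ i : Fin e, a i.succ.succ.succ = ∑ i : Fin e, b i.succ.succ.succ :=
    Finset.sum_congr rfl fun i _ => congrFun h4 i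
  have h6 : a 1 = b 1 := by rw [h0, h3, h5] at h1; omega
  funext i
  refine Fin.cases h0 (fun i => Fin.cases h6 (fun i => Fin.cases h3 (fun i => ?_) i) i) i
  exact congrFun h4 i

lemma Z_finite (e m : ℕ) (δ : ℝ) (p : ℕ) : (Z e m δ p).Finite :=
  Set.Finite.of_injOn (fU_maps e m δ p) (fU_inj e m δ p) (Finset.finite_toSet _)

lemma Z_upper (e m : ℕ) (δ : ℝ) (p : ℕ) :
    (Z e m δ p).ncard ≤ (p + 1) * (⌈δ * m⌉₊ * (p * m + 1) ^ e) := by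
  have h := Set.ncard_le_ncard_of_injOn (fU e) (fU_maps e m δ p) (fU_inj e m δ p)
    (Finset.finite_toSet _)
  rw [Set.ncard_coe_finset] at h
  simpa [U] using h

/-- The finite set used for the lower bound. -/
def L (e m N J : ℕ) : Finset (Σ _ : ℕ × ℕ, (Fin (e + 1) →₀ ℕ)) :=
  (Finset.range N ×ˢ Finset.range (J + 1)).sigma
    (fun x => (Finset.univ : Finset (Fin (e + 1))).finsuppAntidiag ((x.2 + N) * m - x.1))

/-- The tuple built from the data. -/
def fL (e N p : ℕ) (x : Σ _ : ℕ × ℕ, (Fin (e + 1) →₀ ℕ)) : Fin (e + 1 + 2) → ℕ :=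
  Fin.cons (p - (x.1.2 + N)) (Fin.cons (x.2 0) (Fin.cons x.1.1 (fun i => x.2 i.succ)))

lemma L_card (e m N J : ℕ) (hm : 0 < m) :
    N * m ^ e * J ^ (e + 1) ≤ (e + 1).factorial * (L e m N J).card := by
  rw [L, Finset.card_sigma, Finset.sum_product]
  have key : ∀ t ∈ Finset.range N, m ^ e * J ^ (e + 1) ≤ (e + 1).factorial *
      ∑ j ∈ Finset.range (J + 1), ((Finset.univ : Finset (Fin (e + 1))).finsuppAntidiag
        ((j + N) * m - t)).card := by
    intro t ht
    rw [Finset.mem_range] at ht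
    calc m ^ e * J ^ (e + 1) ≤ m ^ e * ((e + 1) * ∑ j ∈ Finset.range (J + 1), j ^ e) := by
          gcongr; exact sum_pow_ge J e
      _ = (e + 1) * ∑ j ∈ Finset.range (J + 1), (j * m) ^ e := by
          simp only [mul_pow, ← Finset.sum_mul]; ring
      _ ≤ (e + 1) * ∑ j ∈ Finset.range (J + 1), (e.factorial *
            ((Finset.univ : Finset (Fin (e + 1))).finsuppAntidiag ((j + N) * m - t)).card) := by
          gcongr with j hj
          refine le_trans (Nat.pow_le_pow_left ?_ e) (card_anti _ e)
          have : N ≤ N * m := Nat.le_mul_of_pos_right _ hm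
          rw [add_mul]; omega
      _ = _ := by rw [← Finset.mul_sum, Nat.factorial_succ, mul_assoc]
  have := Finset.sum_le_sum key
  rw [← Finset.mul_sum (Finset.range N) _ (e + 1).factorial, Finset.sum_const, Finset.card_range,
    smul_eq_mul, ← mul_assoc] at this
  exact this

lemma fL_maps (e m : ℕ) (hm : 0 < m) (δ : ℝ) (p J : ℕ) (hJ : J + ⌈δ * m⌉₊ ≤ p)
    (hp : (p : ℝ) / (δ + 1) ≤ p - (J + ⌈δ * m⌉₊ : ℕ)) :
    ∀ x ∈ (L e m ⌈δ * m⌉₊ J : Set _), fL e ⌈δ * m⌉₊ p x ∈ Z e m δ p := by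
  rintro ⟨⟨t, j⟩, b⟩ hx
  simp only [L, Finset.coe_sigma, Set.mem_sigma_iff, Finset.mem_coe, Finset.mem_product,
    Finset.mem_range, Finset.mem_finsuppAntidiag] at hx
  obtain ⟨⟨ht, hj⟩, hb, -⟩ := hx
  have h0 : fL e ⌈δ * m⌉₊ p ⟨(t, j), b⟩ 0 = p - (j + ⌈δ * m⌉₊) := rfl
  have h1 : fL e ⌈δ * m⌉₊ p ⟨(t, j), b⟩ 1 = b 0 := rfl
  have h2 : fL e ⌈δ * m⌉₊ p ⟨(t, j), b⟩ 2 = t := rfl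
  have h3 : ∀ i : Fin e, fL e ⌈δ * m⌉₊ p ⟨(t, j), b⟩ i.succ.succ.succ = b i.succ := fun _ => rfl
  refine ⟨?_, ?_, ?_, ?_⟩
  · rw [sum_split, h0, h1, h2]
    simp only [h3]
    rw [Fin.sum_univ_succ] at hb
    have hN : ⌈δ * m⌉₊ ≤ (j + ⌈δ * m⌉₊) * m :=
      (Nat.le_add_left _ _).trans (Nat.le_mul_of_pos_right _ hm)
    have hk : (j + ⌈δ * m⌉₊) * m ≤ p * m := Nat.mul_le_mul_right _ (by omega)
    rw [Nat.sub_mul]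
    omega
  · rw [h0, Nat.cast_sub (by omega)]
    refine hp.trans ?_
    gcongr
    omega
  · rw [h0]; omega
  · rw [h2]; exact Nat.lt_ceil.1 ht

lemma fL_inj (e m N p J : ℕ) (hJ : J + N ≤ p) : Set.InjOn (fL e N p) (L e m N J : Set _) := by
  rintro ⟨⟨t, j⟩, b⟩ hx ⟨⟨t', j'⟩, b'⟩ hx' h
  simp only [L, Finset.coe_sigma, Set.mem_sigma_iff, Finset.mem_coe, Finset.mem_product,
    Finset.mem_range, Finset.mem_finsuppAntidiag] at hx hx'
  have h0 : p - (j + N) = p - (j' + N) := congrFun h 0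
  have h1 : b 0 = b' 0 := congrFun h 1
  have h2 : t = t' := congrFun h 2
  have h3 : ∀ i : Fin e, b i.succ = b' i.succ := fun i => congrFun h i.succ.succ.succ
  have hj : j = j' := by omega
  have hb : b = b' := by
    ext i
    exact Fin.cases h1 h3 i
  subst h2 hj hb
  rfl

lemma Z_lower (e m : ℕ) (hm : 0 < m) (δ : ℝ) (p J : ℕ) (hJ : J + ⌈δ * m⌉₊ ≤ p)
    (hp : (p : ℝ) / (δ + 1) ≤ p - (J + ⌈δ * m⌉₊ : ℕ)) :
    ⌈δ * m⌉₊ * m ^ e * J ^ (e + 1) ≤ (e + 1).factorial * (Z e m δ p).ncard := by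
  refine (L_card e m _ J hm).trans (Nat.mul_le_mul_left _ ?_)
  have h := Set.ncard_le_ncard_of_injOn _ (fL_maps e m hm δ p J hJ hp) (fL_inj e m _ p J hJ)
    (Z_finite e m δ p)
  rwa [Set.ncard_coe_finset] at h

lemma upper_real (e m : ℕ) (hm : 0 < m) (δ : ℝ) (p : ℕ) (hp : 0 < p) :
    ((Z e m δ p).ncard : ℝ) / ((p : ℝ) * m) ^ (e + 1) ≤ ⌈δ * m⌉₊ * 2 ^ (e + 1) := by
  have hpm : 0 < p * m := Nat.mul_pos hp hm
  have hpm' : (0 : ℝ) < (p : ℝ) * m := by exact_mod_cast hpm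
  rw [div_le_iff₀ (by positivity)]
  have h : (Z e m δ p).ncard ≤ ⌈δ * m⌉₊ * 2 ^ (e + 1) * (p * m) ^ (e + 1) := by
    refine (Z_upper e m δ p).trans ?_
    have h1 : p + 1 ≤ 2 * (p * m) := by
      have : p ≤ p * m := Nat.le_mul_of_pos_right _ hm
      omega
    have h2 : p * m + 1 ≤ 2 * (p * m) := by omega
    calc (p + 1) * (⌈δ * m⌉₊ * (p * m + 1) ^ e)
        ≤ (2 * (p * m)) * (⌈δ * m⌉₊ * (2 * (p * m)) ^ e) := by gcongr
      _ = _ := by ring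
  exact_mod_cast h

lemma lower_real (e m : ℕ) (hm : 0 < m) (δ : ℝ) (hδ : 0 < δ) (p : ℕ) (hp : 0 < p)
    (hbig : (⌈δ * m⌉₊ : ℝ) + 1 ≤ p * (δ / (1 + δ))) :
    δ / (e + 1).factorial * (δ / (1 + δ) - (⌈δ * m⌉₊ + 1) / p) ^ (e + 1) ≤
      ((Z e m δ p).ncard : ℝ) / ((p : ℝ) * m) ^ (e + 1) := by
  set N := ⌈δ * m⌉₊ with hN
  have hp' : (0 : ℝ) < p := by exact_mod_cast hp
  have hm' : (0 : ℝ) < m := by exact_mod_cast hm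
  set K := ⌊(p : ℝ) * (δ / (1 + δ))⌋₊ with hK
  have hK1 : (K : ℝ) ≤ p * (δ / (1 + δ)) := Nat.floor_le (by positivity)
  have hK2 : (p : ℝ) * (δ / (1 + δ)) < K + 1 := Nat.lt_floor_add_one _
  have hNK : N ≤ K := by
    have : (N : ℝ) ≤ K := by linarith
    exact_mod_cast this
  have hid : (p : ℝ) / (δ + 1) = p - p * (δ / (1 + δ)) := by field_simp; ring
  have hsum : K - N + N = K := by omega
  have hKp : K ≤ p := by
    have : (0 : ℝ) ≤ (p : ℝ) / (δ + 1) := by positivity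
    have : (K : ℝ) ≤ p := by linarith
    exact_mod_cast this
  have h := Z_lower e m hm δ p (K - N) (by rw [← hN, hsum]; exact hKp)
    (by rw [← hN, hsum, hid]; linarith)
  rw [← hN] at h
  have h' : (N : ℝ) * m ^ e * ((K - N : ℕ) : ℝ) ^ (e + 1) ≤
      (e + 1).factorial * ((Z e m δ p).ncard : ℝ) := by exact_mod_cast h
  rw [Nat.cast_sub hNK] at h'
  rw [le_div_iff₀ (by positivity)]
  have hF : (0 : ℝ) < (e + 1).factorial := by exact_mod_cast Nat.factorial_pos _
  have hNm : δ * m ≤ N := Nat.le_ceil _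
  have hlow : 0 ≤ p * (δ / (1 + δ)) - (N + 1) := by linarith
  have e1 : δ / (e + 1).factorial * (δ / (1 + δ) - (N + 1) / p) ^ (e + 1) * (p * m) ^ (e + 1)
      = (δ * m * m ^ e * (p * (δ / (1 + δ)) - (N + 1)) ^ (e + 1)) / (e + 1).factorial := by
    have : (p * (δ / (1 + δ)) - (N + 1)) = p * (δ / (1 + δ) - (N + 1) / p) := by
      field_simp
    rw [this, mul_pow, mul_pow]
    ring
  rw [e1, div_le_iff₀ hF, mul_comm _ ((e + 1).factorial : ℝ)]
  refine le_trans ?_ h'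
  have hle : p * (δ / (1 + δ)) - (N + 1) ≤ (K : ℝ) - N := by linarith
  have hpow := pow_le_pow_left₀ hlow hle (e + 1)
  exact mul_le_mul (mul_le_mul_of_nonneg_right hNm (by positivity)) hpow
    (pow_nonneg hlow _) (by positivity)

end ZCount

/-- Counting estimate giving the volume deficit `δ^{d+1}/(d!(1+δ)^d)`.
Let `d ≥ 1`, `δ > 0` and `m ≥ 1` with `δm ≥ 1`.  For each `p ≥ 1` let `Z(p)` be the set
of tuples `(a₀, …, a_{d+1}) ∈ ℕ^{d+2}` with `a₀·m + Σ_{i=1}^{d+1} aᵢ = p·m`,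
`p/(δ+1) ≤ a₀ ≤ p` and `a₂ < δm`.  Then
`liminf_{p → ∞} #Z(p)/(pm)^d ≥ δ^{d+1}/(d!·(1+δ)^d)`. -/
theorem liminf_card_Z_ge
    (d : ℕ) (hd : 1 ≤ d) (δ : ℝ) (hδ : 0 < δ)
    (m : ℕ) (hm : 0 < m) (hδm : 1 ≤ δ * m) :
    δ ^ (d + 1) / ((d.factorial : ℝ) * (1 + δ) ^ d) ≤
      liminf (fun p : ℕ =>
        ({a : Fin (d + 2) → ℕ |
            a 0 * m + ∑ i : Fin (d + 1), a i.succ = p * m ∧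
            (p : ℝ) / (δ + 1) ≤ (a 0 : ℝ) ∧ a 0 ≤ p ∧
            ((a 2 : ℕ) : ℝ) < δ * m}.ncard : ℝ) / ((p : ℝ) * m) ^ d) atTop := by
  obtain ⟨e, rfl⟩ : ∃ e, d = e + 1 := ⟨d - 1, by omega⟩
  change _ ≤ liminf (fun p : ℕ =>
    ((ZCount.Z e m δ p).ncard : ℝ) / ((p : ℝ) * m) ^ (e + 1)) atTop
  set N := ⌈δ * m⌉₊ with hN
  have hlim : Tendsto (fun p : ℕ => δ / (e + 1).factorial *
      (δ / (1 + δ) - ((N : ℝ) + 1) / p) ^ (e + 1)) atTop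
      (nhds (δ / (e + 1).factorial * (δ / (1 + δ) - 0) ^ (e + 1))) :=
    ((tendsto_const_nhds.sub (tendsto_const_div_atTop_nhds_zero_nat _)).pow _).const_mul _
  have heq : δ ^ (e + 1 + 1) / (((e + 1).factorial : ℝ) * (1 + δ) ^ (e + 1)) =
      δ / (e + 1).factorial * (δ / (1 + δ) - 0) ^ (e + 1) := by
    rw [sub_zero, div_pow, div_mul_div_comm, pow_succ' δ (e + 1)]
  rw [heq, ← hlim.liminf_eq]
  refine liminf_le_liminf ?_ hlim.isBoundedUnder_ge ?_
  · have hb : ∀ᶠ p : ℕ in atTop, ((N : ℝ) + 1) ≤ p * (δ / (1 + δ)) :=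
      (tendsto_natCast_atTop_atTop.atTop_mul_const (by positivity)).eventually_ge_atTop _
    filter_upwards [hb, eventually_gt_atTop 0] with p h1 h2
    exact ZCount.lower_real e m hm δ hδ p h2 h1
  · refine IsBoundedUnder.isCoboundedUnder_ge ⟨(N : ℝ) * 2 ^ (e + 1), ?_⟩
    rw [eventually_map]
    filter_upwards [eventually_gt_atTop 0] with p h2
    exact ZCount.upper_real e m hm δ p h2
end
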